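/- arXiv:1912.07707 — 2 statements merged into one kernel-verified Lean document; each statement's English description precedes it below -/
import Mathlib

section
/- Let d ≥ 1, 1 < p < ∞, m ∈ ℤ_{≥0} and δ ∈ ℝ. For every v ∈ C_c^∞(ℝ^d), ‖(S(t)v − v)/t − Δv‖_{H^{m,p}_δ} → 0 as t → 0⁺. In particular the Laplacian is the generator of the heat semigroup on the weighted Sobolev space, acting on smooth compactly supported functions. -/
open MeasureTheory

/-- The Japanese bracket `⟨x⟩ = √(1 + |x|²)`. -/
noncomputable def jb {d : ℕ} (x : EuclideanSpace ℝ (Fin d)) : ℝ := Real.sqrt (1 + ‖x‖ ^ 2)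

/-- Partial derivative in the `i`-th coordinate direction. -/
noncomputable def pderiv' {d : ℕ} {F : Type*} [NormedAddCommGroup F] [NormedSpace ℝ F]
    (i : Fin d) (f : EuclideanSpace ℝ (Fin d) → F) : EuclideanSpace ℝ (Fin d) → F :=
  fun x => fderiv ℝ f x (EuclideanSpace.single i 1)

/-- Multi-index derivative `∂^α f`. -/
noncomputable def mderiv {d : ℕ} {F : Type*} [NormedAddCommGroup F] [NormedSpace ℝ F]
    (α : Fin d → ℕ) (f : EuclideanSpace ℝ (Fin d) → F) : EuclideanSpace ℝ (Fin d) → F :=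
  (List.finRange d).foldr (fun i g => (pderiv' i)^[α i] g) f

/-- The Laplacian `Δf = Σ_i ∂_i ∂_i f`. -/
noncomputable def lap {d : ℕ} {F : Type*} [NormedAddCommGroup F] [NormedSpace ℝ F]
    (f : EuclideanSpace ℝ (Fin d) → F) : EuclideanSpace ℝ (Fin d) → F :=
  fun x => ∑ i : Fin d, pderiv' i (pderiv' i f) x

/-- Weighted `L^p` norm `‖⟨x⟩^δ f‖_{L^p}`. -/
noncomputable def wLp {d : ℕ} {F : Type*} [NormedAddCommGroup F] [NormedSpace ℝ F]
    (p δ : ℝ) (f : EuclideanSpace ℝ (Fin d) → F) : ℝ :=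
  (eLpNorm (fun x => jb x ^ δ • f x) (ENNReal.ofReal p) volume).toReal

/-- Weighted Sobolev norm `‖f‖_{H^{m,p}_δ} = Σ_{|α| ≤ m} ‖⟨x⟩^δ ∂^α f‖_{L^p}`. -/
noncomputable def Hnorm (d m : ℕ) {F : Type*} [NormedAddCommGroup F] [NormedSpace ℝ F]
    (p δ : ℝ) (f : EuclideanSpace ℝ (Fin d) → F) : ℝ :=
  ∑ α ∈ Finset.univ.filter (fun α : Fin d → Fin (m + 1) => ∑ i, (α i : ℕ) ≤ m),
    wLp p δ (mderiv (fun i => (α i : ℕ)) f)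

/-- The heat semigroup `S(t)` for real time (with `S(0) = id`). -/
noncomputable def heatS (d : ℕ) (t : ℝ) (v : EuclideanSpace ℝ (Fin d) → ℝ) :
    EuclideanSpace ℝ (Fin d) → ℝ :=
  if t = 0 then v else fun x =>
    (4 * Real.pi * t) ^ (-(d : ℝ) / 2) * ∫ y, Real.exp (-‖x - y‖ ^ 2 / (4 * t)) * v y

/-! With `Z` a standard Gaussian vector, the heat flow is the average `S(t)f(x) = 𝔼 f(x + √(2t) Z)`.
Expand `f(x + √(2t) Z)` to second order: since `𝔼 Z = 0` and `Z` has covariance `1`, the linear term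
averages to `0` and the quadratic one to `t Δf(x)`. Only the cubic remainder, of order `t^{3/2}`, is
left, so that `(S(t)f - f)/t - Δf = O(√t)`; for a Schwartz function `f` the remainder decays faster
than any power of `x`, uniformly in `t`, which absorbs every weight `⟨x⟩^δ`. As `S(t)` and `Δ`
commute with `∂^α`, the derivatives of the error are the errors of the derivatives. -/

open ProbabilityTheory Filter Topology SchwartzMap Module
open scoped LineDeriv Laplacian RealInnerProductSpace

section Taylor

variable {E F : Type*} [NormedAddCommGroup E] [NormedSpace ℝ E] [NormedAddCommGroup F]
  [NormedSpace ℝ F]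

/-- The remainder `f (x + y) - ∑_{k ≤ n} D^k f(x)(y, …, y) / k!` of the Taylor expansion of order
`n` of `f` at `x`. -/
noncomputable def taylorRemainder (n : ℕ) (f : E → F) (x y : E) : F :=
  f (x + y) - ∑ k ∈ Finset.range (n + 1), (k.factorial : ℝ)⁻¹ • iteratedFDeriv ℝ k f x fun _ => y

theorem taylorRemainder_two (f : E → F) (x y : E) :
    taylorRemainder 2 f x y =
      f (x + y) - f x - fderiv ℝ f x y - (2 : ℝ)⁻¹ • fderiv ℝ (fderiv ℝ f) x y y := by
  simp [taylorRemainder, Finset.sum_range_succ, iteratedFDeriv_two_apply, sub_sub, Nat.factorial]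

theorem norm_taylorRemainder_le [CompleteSpace F] {n : ℕ} {f : E → F} (hf : ContDiff ℝ (n + 1) f)
    {x y : E} {C : ℝ}
    (hC : ∀ r ∈ Set.Icc (0 : ℝ) 1, ‖iteratedFDeriv ℝ (n + 1) f (x + r • y)‖ ≤ C) :
    ‖taylorRemainder n f x y‖ ≤ C * ‖y‖ ^ (n + 1) / n.factorial := by
  have integrand_le : ∀ r ∈ Set.uIoc (0 : ℝ) 1,
      ‖(1 - r) ^ n • iteratedFDeriv ℝ (n + 1) f (x + r • y) fun _ => y‖ ≤ C * ‖y‖ ^ (n + 1) := by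
    intro r hr
    rw [Set.uIoc_of_le zero_le_one] at hr
    have weight_le : |1 - r| ^ n ≤ 1 :=
      pow_le_one₀ (abs_nonneg _) (abs_le.2 ⟨by linarith [hr.2], by linarith [hr.1]⟩)
    calc ‖(1 - r) ^ n • iteratedFDeriv ℝ (n + 1) f (x + r • y) fun _ => y‖
        ≤ 1 * (‖iteratedFDeriv ℝ (n + 1) f (x + r • y)‖ * ‖y‖ ^ (n + 1)) := by
          rw [norm_smul, norm_pow, Real.norm_eq_abs]
          gcongr
          simpa using (iteratedFDeriv ℝ (n + 1) f (x + r • y)).le_opNorm fun _ => y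
      _ ≤ C * ‖y‖ ^ (n + 1) := by
          rw [one_mul]
          gcongr
          exact hC r (Set.Ioc_subset_Icc_self hr)
  have integral_le := intervalIntegral.norm_integral_le_of_norm_le_const integrand_le
  rw [sub_zero, abs_one, mul_one] at integral_le
  calc ‖taylorRemainder n f x y‖
      = (n.factorial : ℝ)⁻¹ *
          ‖∫ r in 0..1, (1 - r) ^ n • iteratedFDeriv ℝ (n + 1) f (x + r • y) fun _ => y‖ := by
        rw [taylorRemainder, map_add_eq_sum_add_integral_iteratedFDeriv fun r _ => hf.contDiffAt,
          add_sub_cancel_left, norm_smul, norm_inv, Real.norm_natCast]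
    _ ≤ (n.factorial : ℝ)⁻¹ * (C * ‖y‖ ^ (n + 1)) := by gcongr
    _ = C * ‖y‖ ^ (n + 1) / n.factorial := inv_mul_eq_div _ _

theorem one_add_norm_le_mul_one_add_norm {r : ℝ} (hr : r ∈ Set.Icc (0 : ℝ) 1) (x y : E) :
    1 + ‖x‖ ≤ (1 + ‖x + r • y‖) * (1 + ‖y‖) := by
  have : ‖x‖ ≤ ‖x + r • y‖ + ‖y‖ := by
    calc ‖x‖ = ‖x + r • y - r • y‖ := by rw [add_sub_cancel_right]
      _ ≤ ‖x + r • y‖ + ‖r • y‖ := norm_sub_le _ _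
      _ ≤ ‖x + r • y‖ + ‖y‖ := by
        gcongr
        rw [norm_smul, Real.norm_of_nonneg hr.1]
        exact mul_le_of_le_one_left (norm_nonneg y) hr.2
  nlinarith [mul_nonneg (norm_nonneg (x + r • y)) (norm_nonneg y)]

theorem exists_pow_mul_norm_taylorRemainder_le [CompleteSpace F] (n k : ℕ) (f : 𝓢(E, F)) :
    ∃ C, 0 ≤ C ∧ ∀ x y,
      (1 + ‖x‖) ^ k * ‖taylorRemainder n f x y‖ ≤ C * ((1 + ‖y‖) ^ k * ‖y‖ ^ (n + 1)) := by
  set C := 2 ^ k * (Finset.Iic (k, n + 1)).sup (fun j => SchwartzMap.seminorm ℝ j.1 j.2) f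
  refine ⟨C / n.factorial, by positivity, fun x y => ?_⟩
  have decay (z : E) : (1 + ‖z‖) ^ k * ‖iteratedFDeriv ℝ (n + 1) f z‖ ≤ C :=
    one_add_le_sup_seminorm_apply (𝕜 := ℝ) (m := (k, n + 1)) le_rfl le_rfl f z
  have hx : 0 < (1 + ‖x‖) ^ k := by positivity
  have segment_le : ∀ r ∈ Set.Icc (0 : ℝ) 1,
      ‖iteratedFDeriv ℝ (n + 1) f (x + r • y)‖ ≤ C * (1 + ‖y‖) ^ k / (1 + ‖x‖) ^ k := by
    intro r hr
    rw [le_div_iff₀ hx]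
    calc ‖iteratedFDeriv ℝ (n + 1) f (x + r • y)‖ * (1 + ‖x‖) ^ k
        ≤ ‖iteratedFDeriv ℝ (n + 1) f (x + r • y)‖ * ((1 + ‖x + r • y‖) * (1 + ‖y‖)) ^ k := by
          gcongr
          exact one_add_norm_le_mul_one_add_norm hr x y
      _ = ((1 + ‖x + r • y‖) ^ k * ‖iteratedFDeriv ℝ (n + 1) f (x + r • y)‖) * (1 + ‖y‖) ^ k := by
          rw [mul_pow]; ring
      _ ≤ C * (1 + ‖y‖) ^ k := by
          gcongr
          exact decay _
  calc (1 + ‖x‖) ^ k * ‖taylorRemainder n f x y‖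
      ≤ (1 + ‖x‖) ^ k * (C * (1 + ‖y‖) ^ k / (1 + ‖x‖) ^ k * ‖y‖ ^ (n + 1) / n.factorial) := by
        gcongr
        exact norm_taylorRemainder_le (f.smooth (n + 1)) segment_le
    _ = C / n.factorial * ((1 + ‖y‖) ^ k * ‖y‖ ^ (n + 1)) := by
        field_simp

end Taylor

section Gaussian

variable {E F : Type*} [NormedAddCommGroup E] [InnerProductSpace ℝ E] [FiniteDimensional ℝ E]
  [MeasurableSpace E] [BorelSpace E] [NormedAddCommGroup F] [NormedSpace ℝ F]

theorem stdGaussian_eq_withDensity :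
    stdGaussian E = volume.withDensity fun z =>
      ENNReal.ofReal ((2 * Real.pi) ^ (-(finrank ℝ E : ℝ) / 2) * Real.exp (-‖z‖ ^ 2 / 2)) := by
  set c : ℝ := (2 * Real.pi) ^ (-(finrank ℝ E : ℝ) / 2)
  have normalized : c * (2 * Real.pi) ^ (finrank ℝ E / 2 : ℝ) = 1 := by
    rw [← Real.rpow_add (by positivity), neg_div, neg_add_cancel, Real.rpow_zero]
  have hc : 0 ≤ c := by positivity
  clear_value c
  have integral_density : ∫ z : E, c * Real.exp (-‖z‖ ^ 2 / 2) = 1 := by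
    rw [integral_const_mul, ← normalized, show 2 * Real.pi = Real.pi / (1 / 2) by ring,
      ← GaussianFourier.integral_rexp_neg_mul_sq_norm (by norm_num)]
    simp_rw [neg_mul, one_div_mul_eq_div, neg_div]
  have := isFiniteMeasure_withDensity_ofReal (integrable_of_integral_eq_one integral_density).2
  refine Measure.ext_of_charFun (funext fun t => ?_)
  have integrand_eq (z : E) : (ENNReal.ofReal (c * Real.exp (-‖z‖ ^ 2 / 2))).toReal •
      Complex.exp (⟪z, t⟫ * Complex.I) =
      (c : ℂ) * Complex.exp (-(1 / 2 : ℂ) * ‖z‖ ^ 2 + Complex.I * ⟪t, z⟫) := by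
    rw [ENNReal.toReal_ofReal (by positivity), Complex.real_smul, Complex.exp_add, real_inner_comm]
    push_cast
    ring_nf
  calc charFun (stdGaussian E) t
      = ((c * (2 * Real.pi) ^ (finrank ℝ E / 2 : ℝ) : ℝ) : ℂ) * Complex.exp (-‖t‖ ^ 2 / 2) := by
        rw [charFun_stdGaussian, normalized, Complex.ofReal_one, one_mul]
    _ = c * ∫ z : E, Complex.exp (-(1 / 2 : ℂ) * ‖z‖ ^ 2 + Complex.I * ⟪t, z⟫) := by
        rw [GaussianFourier.integral_cexp_neg_mul_sq_norm_add (by norm_num), Complex.I_sq,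
          Complex.ofReal_mul, Complex.ofReal_cpow (by positivity)]
        push_cast
        ring_nf
    _ = charFun _ t := by
        rw [charFun_apply, integral_withDensity_eq_integral_toReal_smul (by fun_prop)
          (ae_of_all _ fun _ => ENNReal.ofReal_lt_top), ← integral_const_mul]
        simp_rw [integrand_eq]

theorem integrable_one_add_norm_pow_stdGaussian (k : ℕ) :
    Integrable (fun z : E => (1 + ‖z‖) ^ k) (stdGaussian E) := by
  have h := ((memLp_const (1 : ℝ)).add (IsGaussian.memLp_id (stdGaussian E) k
    (ENNReal.natCast_ne_top k)).norm).integrable_norm_pow'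
  refine h.congr (ae_of_all _ fun z => ?_)
  simp [abs_of_nonneg (add_nonneg zero_le_one (norm_nonneg z))]

theorem integral_inner_mul_inner_stdGaussian (u v : E) :
    ∫ z, ⟪u, z⟫ * ⟪v, z⟫ ∂stdGaussian E = ⟪u, v⟫ := by
  rw [← innerSL_apply_apply ℝ u v, ← covarianceBilin_stdGaussian,
    covarianceBilin_apply IsGaussian.memLp_two_id]
  simp only [id_eq, integral_id_stdGaussian, sub_zero]

theorem integrable_inner_mul_inner_stdGaussian (u v : E) :
    Integrable (fun z => ⟪u, z⟫ * ⟪v, z⟫) (stdGaussian E) :=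
  ((innerSL ℝ u).comp_memLp' IsGaussian.memLp_two_id).integrable_mul
    ((innerSL ℝ v).comp_memLp' IsGaussian.memLp_two_id)

theorem integral_clm_stdGaussian [CompleteSpace F] (L : E →L[ℝ] F) :
    ∫ z, L z ∂stdGaussian E = 0 := by
  simpa only [id_eq, integral_id_stdGaussian, map_zero] using
    L.integral_comp_comm (IsGaussian.integrable_id (μ := stdGaussian E))

theorem integrable_bilin_self_stdGaussian (B : E →L[ℝ] E →L[ℝ] F) :
    Integrable (fun z => B z z) (stdGaussian E) := by
  refine ((IsGaussian.memLp_two_id (μ := stdGaussian E)).integrable_norm_pow two_ne_zero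
    |>.const_mul ‖B‖).mono' (by fun_prop) (ae_of_all _ fun z => ?_)
  simpa only [id_eq, sq, mul_assoc] using B.le_opNorm₂ z z

theorem integral_bilin_self_stdGaussian [CompleteSpace F] {ι : Type*} [Fintype ι]
    (b : OrthonormalBasis ι ℝ E) (B : E →L[ℝ] E →L[ℝ] F) :
    ∫ z, B z z ∂stdGaussian E = ∑ i, B (b i) (b i) := by
  have expand (z : E) : B z z = ∑ i, ∑ j, (⟪b i, z⟫ * ⟪b j, z⟫) • B (b i) (b j) := by
    conv_lhs => rw [← b.sum_repr' z]
    simp only [map_sum, map_smul, _root_.sum_apply, smul_apply, smul_smul, Finset.smul_sum]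
    rw [Finset.sum_comm]
    simp only [mul_comm]
  have integrable (i j : ι) :
      Integrable (fun z => (⟪b i, z⟫ * ⟪b j, z⟫) • B (b i) (b j)) (stdGaussian E) :=
    (integrable_inner_mul_inner_stdGaussian _ _).smul_const _
  simp_rw [expand]
  rw [integral_finsetSum _ fun i _ => integrable_finsetSum _ fun j _ => integrable i j]
  refine Finset.sum_congr rfl fun i _ => ?_
  classical
  rw [integral_finsetSum _ fun j _ => integrable i j]
  simp [integral_smul_const, integral_inner_mul_inner_stdGaussian, b.inner_eq_ite]

end Gaussian

section SchwartzDerivatives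

variable {E F : Type*} [NormedAddCommGroup E] [NormedSpace ℝ E] [NormedAddCommGroup F]
  [NormedSpace ℝ F]

theorem lineDerivOp_lineDerivOp_apply (u v : E) (f : 𝓢(E, F)) (x : E) :
    ∂_{u} (∂_{v} f) x = fderiv ℝ (fderiv ℝ f) x u v := by
  have h := iteratedLineDerivOp_eq_iteratedFDeriv (m := ![u, v]) (f := f) (x := x)
  rw [iteratedFDeriv_two_apply] at h
  simpa [LineDeriv.iteratedLineDerivOp_succ_left] using h

theorem lineDerivOp_comm (u v : E) (f : 𝓢(E, F)) : ∂_{u} (∂_{v} f) = ∂_{v} (∂_{u} f) := by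
  ext x
  rw [lineDerivOp_lineDerivOp_apply, lineDerivOp_lineDerivOp_apply]
  exact (f.contDiffAt 2).isSymmSndFDerivAt (by simp) u v

end SchwartzDerivatives

section Laplacian

variable {E F : Type*} [NormedAddCommGroup E] [InnerProductSpace ℝ E] [FiniteDimensional ℝ E]
  [NormedAddCommGroup F] [NormedSpace ℝ F]

theorem lineDerivOp_laplacian (v : E) (f : 𝓢(E, F)) : ∂_{v} (Δ f) = Δ (∂_{v} f) := by
  simp only [laplacian_eq_sum (stdOrthonormalBasis ℝ E), LineDeriv.lineDerivOp_sum,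
    lineDerivOp_comm v]

theorem laplacian_apply_eq_sum_fderiv_fderiv {ι : Type*} [Fintype ι] (b : OrthonormalBasis ι ℝ E)
    (f : 𝓢(E, F)) (x : E) : Δ f x = ∑ i, fderiv ℝ (fderiv ℝ f) x (b i) (b i) := by
  rw [laplacian_eq_sum b, _root_.sum_apply]
  exact Finset.sum_congr rfl fun i _ => lineDerivOp_lineDerivOp_apply _ _ f x

end Laplacian

section Heat

variable {E F : Type*} [NormedAddCommGroup E] [InnerProductSpace ℝ E] [FiniteDimensional ℝ E]
  [MeasurableSpace E] [BorelSpace E] [NormedAddCommGroup F] [NormedSpace ℝ F]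

/-- The heat flow `S(t)f(x) = 𝔼 f(x + √(2t) Z)`, with `Z` a standard Gaussian vector. It is defined
in this probabilistic form, rather than by the heat kernel, because the `t`-dependence then sits in
the argument of `f` only, so that `f` can be Taylor expanded under the integral. -/
noncomputable def heatFlow (t : ℝ) (f : E → F) (x : E) : F :=
  ∫ z, f (x + √(2 * t) • z) ∂stdGaussian E

theorem heatFlow_eq_integral_heatKernel {t : ℝ} (ht : 0 < t) (f : E → F) (x : E) :
    heatFlow t f x = (4 * Real.pi * t) ^ (-(finrank ℝ E : ℝ) / 2) •
      ∫ y, Real.exp (-‖x - y‖ ^ 2 / (4 * t)) • f y := by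
  set c : ℝ := (2 * Real.pi) ^ (-(finrank ℝ E : ℝ) / 2)
  set G : E → F := fun y => Real.exp (-‖y‖ ^ 2 / (4 * t)) • f (x + y)
  have integrand_eq (z : E) : (ENNReal.ofReal (c * Real.exp (-‖z‖ ^ 2 / 2))).toReal •
      f (x + √(2 * t) • z) = c • G (√(2 * t) • z) := by
    have : -‖√(2 * t) • z‖ ^ 2 / (4 * t) = -‖z‖ ^ 2 / 2 := by
      rw [norm_smul, mul_pow, Real.norm_eq_abs, sq_abs, Real.sq_sqrt (by positivity)]
      field_simp
      ring
    rw [ENNReal.toReal_ofReal (by positivity), mul_smul, ← this]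
  have constant_eq : c * |(√(2 * t) ^ finrank ℝ E)⁻¹| =
      (4 * Real.pi * t) ^ (-(finrank ℝ E : ℝ) / 2) := by
    rw [abs_of_nonneg (by positivity), ← Real.rpow_natCast, Real.sqrt_eq_rpow,
      ← Real.rpow_mul (by positivity), ← Real.rpow_neg (by positivity),
      show 4 * Real.pi * t = 2 * Real.pi * (2 * t) by ring,
      Real.mul_rpow (x := 2 * Real.pi) (by positivity) (by positivity)]
    congr 2
    ring
  have translate : ∫ y, Real.exp (-‖x - y‖ ^ 2 / (4 * t)) • f y = ∫ y, G y := by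
    rw [← integral_sub_right_eq_self G x]
    simp only [G, add_sub_cancel, norm_sub_rev x]
  rw [heatFlow, stdGaussian_eq_withDensity, integral_withDensity_eq_integral_toReal_smul
    (by fun_prop) (ae_of_all _ fun _ => ENNReal.ofReal_lt_top),
    integral_congr_ae (ae_of_all _ integrand_eq), integral_smul, Measure.integral_comp_smul,
    smul_smul, constant_eq, translate]

theorem integrable_comp_add_smul_stdGaussian (f : 𝓢(E, F)) (s : ℝ) (x : E) :
    Integrable (fun z => f (x + s • z)) (stdGaussian E) :=
  .of_bound (by fun_prop) (SchwartzMap.seminorm ℝ 0 0 f)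
    (ae_of_all _ fun _ => norm_le_seminorm ℝ f _)

theorem hasFDerivAt_heatFlow (t : ℝ) (f : 𝓢(E, F)) (x : E) :
    HasFDerivAt (heatFlow t f) (heatFlow t (fderivCLM ℝ E F f) x) x := by
  refine hasFDerivAt_integral_of_dominated_of_fderiv_le
    (F' := fun y z => fderivCLM ℝ E F f (y + √(2 * t) • z)) univ_mem
    (.of_forall fun y => (integrable_comp_add_smul_stdGaussian f _ y).aestronglyMeasurable)
    (integrable_comp_add_smul_stdGaussian f _ x)
    (integrable_comp_add_smul_stdGaussian (fderivCLM ℝ E F f) _ x).aestronglyMeasurable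
    (ae_of_all _ fun z y _ => norm_le_seminorm ℝ (fderivCLM ℝ E F f) _)
    (integrable_const _) (ae_of_all _ fun z y _ => ?_)
  exact (hasFDerivAt_comp_add_right _).2 f.differentiableAt.hasFDerivAt

theorem fderiv_heatFlow_apply (t : ℝ) (f : 𝓢(E, F)) (x v : E) :
    fderiv ℝ (heatFlow t f) x v = heatFlow t (∂_{v} f : 𝓢(E, F)) x := by
  rw [(hasFDerivAt_heatFlow t f x).fderiv]
  exact ContinuousLinearMap.integral_apply
    (integrable_comp_add_smul_stdGaussian (fderivCLM ℝ E F f) _ x) v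

/-- The error `(S(t)f - f)/t - Δf` made when the generator of the heat flow is replaced by its
difference quotient. The argument is a Schwartz function so that `Δ` and the partial derivatives map
the domain to itself. -/
noncomputable def heatDefect (t : ℝ) (f : 𝓢(E, F)) (x : E) : F :=
  t⁻¹ • (heatFlow t f x - f x) - Δ f x

theorem fderiv_heatDefect_apply (t : ℝ) (f : 𝓢(E, F)) (x v : E) :
    fderiv ℝ (heatDefect t f) x v = heatDefect t (∂_{v} f) x := by
  have flow := (hasFDerivAt_heatFlow t f x).differentiableAt
  have h : HasFDerivAt (heatDefect t f) _ x :=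
    ((flow.hasFDerivAt.sub f.differentiableAt.hasFDerivAt).const_smul t⁻¹).sub
      (Δ f).differentiableAt.hasFDerivAt
  rw [h.fderiv, heatDefect, ← lineDerivOp_laplacian, ← fderiv_heatFlow_apply]
  rfl

end Heat

section Remainder

variable {E F : Type*} [NormedAddCommGroup E] [InnerProductSpace ℝ E] [FiniteDimensional ℝ E]
  [MeasurableSpace E] [BorelSpace E] [NormedAddCommGroup F] [NormedSpace ℝ F] [CompleteSpace F]

theorem integral_taylorRemainder_stdGaussian (f : 𝓢(E, F)) (s : ℝ) (x : E) :
    ∫ z, taylorRemainder 2 f x (s • z) ∂stdGaussian E =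
      (∫ z, f (x + s • z) ∂stdGaussian E) - f x - (s ^ 2 / 2) • Δ f x := by
  have remainder_eq (z : E) : taylorRemainder 2 f x (s • z) =
      f (x + s • z) - f x - s • fderiv ℝ f x z -
        (s ^ 2 / 2) • fderiv ℝ (fderiv ℝ f) x z z := by
    simp only [taylorRemainder_two, map_smul, smul_apply, smul_smul]
    ring_nf
  have integrable_value := integrable_comp_add_smul_stdGaussian f s x
  have integrable_increment : Integrable (fun z => f (x + s • z) - f x) (stdGaussian E) :=
    integrable_value.sub (integrable_const _)
  have integrable_linear : Integrable (fun z => s • fderiv ℝ f x z) (stdGaussian E) :=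
    ((fderiv ℝ f x).integrable_comp IsGaussian.integrable_id).smul s
  have integrable_first_order :
      Integrable (fun z => f (x + s • z) - f x - s • fderiv ℝ f x z) (stdGaussian E) :=
    integrable_increment.sub integrable_linear
  have integrable_quadratic : Integrable
      (fun z => (s ^ 2 / 2) • fderiv ℝ (fderiv ℝ f) x z z) (stdGaussian E) :=
    (integrable_bilin_self_stdGaussian _).smul _
  simp_rw [remainder_eq]
  rw [integral_sub integrable_first_order integrable_quadratic,
    integral_sub integrable_increment integrable_linear,
    integral_sub integrable_value (integrable_const _), integral_smul, integral_smul,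
    integral_clm_stdGaussian, integral_bilin_self_stdGaussian (stdOrthonormalBasis ℝ E),
    ← laplacian_apply_eq_sum_fderiv_fderiv, integral_const, probReal_univ, one_smul, smul_zero,
    sub_zero]

theorem heatDefect_eq_integral_taylorRemainder {t : ℝ} (ht : 0 < t) (f : 𝓢(E, F)) (x : E) :
    heatDefect t f x = t⁻¹ • ∫ z, taylorRemainder 2 f x (√(2 * t) • z) ∂stdGaussian E := by
  rw [integral_taylorRemainder_stdGaussian, Real.sq_sqrt (by positivity),
    mul_div_cancel_left₀ _ two_ne_zero, smul_sub _ _ (t • _), inv_smul_smul₀ ht.ne']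
  rfl

theorem exists_pow_mul_norm_integral_taylorRemainder_le (n k : ℕ) (f : 𝓢(E, F)) :
    ∃ C, ∀ s ∈ Set.Icc (0 : ℝ) 1, ∀ x,
      (1 + ‖x‖) ^ k * ‖∫ z, taylorRemainder n f x (s • z) ∂stdGaussian E‖ ≤ C * s ^ (n + 1) := by
  obtain ⟨C, hC, remainder_le⟩ := exists_pow_mul_norm_taylorRemainder_le n k f
  refine ⟨C * ∫ z : E, (1 + ‖z‖) ^ (k + (n + 1)) ∂stdGaussian E, fun s ⟨s_nonneg, s_le⟩ x => ?_⟩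
  have integrand_le (z : E) : ‖(1 + ‖x‖) ^ k • taylorRemainder n f x (s • z)‖ ≤
      C * s ^ (n + 1) * (1 + ‖z‖) ^ (k + (n + 1)) := by
    have norm_eq : ‖s • z‖ = s * ‖z‖ := by rw [norm_smul, Real.norm_of_nonneg s_nonneg]
    calc ‖(1 + ‖x‖) ^ k • taylorRemainder n f x (s • z)‖
        = (1 + ‖x‖) ^ k * ‖taylorRemainder n f x (s • z)‖ := by
          rw [norm_smul, Real.norm_of_nonneg (by positivity)]
      _ ≤ C * ((1 + s * ‖z‖) ^ k * (s * ‖z‖) ^ (n + 1)) := norm_eq ▸ remainder_le x (s • z)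
      _ ≤ C * ((1 + 1 * ‖z‖) ^ k * (s * (1 + ‖z‖)) ^ (n + 1)) := by
          gcongr
          linarith
      _ = C * s ^ (n + 1) * (1 + ‖z‖) ^ (k + (n + 1)) := by
          rw [one_mul, mul_pow, pow_add _ k]
          ring
  calc (1 + ‖x‖) ^ k * ‖∫ z, taylorRemainder n f x (s • z) ∂stdGaussian E‖
      = ‖∫ z, (1 + ‖x‖) ^ k • taylorRemainder n f x (s • z) ∂stdGaussian E‖ := by
        rw [integral_smul, norm_smul, Real.norm_of_nonneg (by positivity)]
    _ ≤ ∫ z, C * s ^ (n + 1) * (1 + ‖z‖) ^ (k + (n + 1)) ∂stdGaussian E :=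
        norm_integral_le_of_norm_le ((integrable_one_add_norm_pow_stdGaussian _).const_mul _)
          (ae_of_all _ integrand_le)
    _ = C * (∫ z : E, (1 + ‖z‖) ^ (k + (n + 1)) ∂stdGaussian E) * s ^ (n + 1) := by
        rw [integral_const_mul]
        ring

theorem exists_pow_mul_norm_heatDefect_le (k : ℕ) (f : 𝓢(E, F)) :
    ∃ C, ∀ t ∈ Set.Ioc (0 : ℝ) (1 / 2), ∀ x,
      (1 + ‖x‖) ^ k * ‖heatDefect t f x‖ ≤ C * √(2 * t) := by
  obtain ⟨C, integral_le⟩ := exists_pow_mul_norm_integral_taylorRemainder_le 2 k f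
  refine ⟨2 * C, fun t ⟨t_pos, t_le⟩ x => ?_⟩
  have s_le : √(2 * t) ≤ 1 := Real.sqrt_le_one.2 (by linarith)
  calc (1 + ‖x‖) ^ k * ‖heatDefect t f x‖
      = t⁻¹ * ((1 + ‖x‖) ^ k *
          ‖∫ z, taylorRemainder 2 f x (√(2 * t) • z) ∂stdGaussian E‖) := by
        rw [heatDefect_eq_integral_taylorRemainder t_pos, norm_smul, norm_inv,
          Real.norm_of_nonneg t_pos.le]
        ring
    _ ≤ t⁻¹ * (C * √(2 * t) ^ 3) := by
        have := integral_le _ ⟨Real.sqrt_nonneg _, s_le⟩ x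
        gcongr
    _ = 2 * C * √(2 * t) := by
        rw [pow_succ, Real.sq_sqrt (by positivity)]
        field_simp

end Remainder

section WeightedSobolev

variable {d : ℕ} {F : Type*} [NormedAddCommGroup F] [NormedSpace ℝ F]

theorem jb_rpow_le_one_add_norm_pow (δ : ℝ) (x : EuclideanSpace ℝ (Fin d)) :
    jb x ^ δ ≤ (1 + ‖x‖) ^ ⌈|δ|⌉₊ := by
  have one_le_jb : 1 ≤ jb x := Real.one_le_sqrt.2 (le_add_of_nonneg_right (sq_nonneg _))
  have jb_le : jb x ≤ 1 + ‖x‖ :=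
    Real.sqrt_le_iff.2 ⟨by positivity, by nlinarith [norm_nonneg x]⟩
  calc jb x ^ δ ≤ jb x ^ (⌈|δ|⌉₊ : ℝ) :=
        Real.rpow_le_rpow_of_exponent_le one_le_jb ((le_abs_self δ).trans (Nat.le_ceil _))
    _ = jb x ^ ⌈|δ|⌉₊ := Real.rpow_natCast _ _
    _ ≤ (1 + ‖x‖) ^ ⌈|δ|⌉₊ := by gcongr

theorem exists_wLp_le_of_pow_mul_norm_le (d : ℕ) (F : Type*) [NormedAddCommGroup F]
    [NormedSpace ℝ F] (p δ : ℝ) :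
    ∃ (k : ℕ) (C : ℝ), ∀ (f : EuclideanSpace ℝ (Fin d) → F) (M : ℝ),
      (∀ x, (1 + ‖x‖) ^ k * ‖f x‖ ≤ M) → wLp p δ f ≤ C * M := by
  obtain ⟨l, weight_lt_top⟩ := Measure.HasTemperateGrowth.exists_eLpNorm_lt_top
    (E := EuclideanSpace ℝ (Fin d)) (ENNReal.ofReal p) (μ := volume) inferInstance
  set w : EuclideanSpace ℝ (Fin d) → ℝ := fun x => (1 + ‖x‖) ^ (-(l : ℝ))
  refine ⟨⌈|δ|⌉₊ + l, (eLpNorm w (ENNReal.ofReal p) volume).toReal, fun f M hM => ?_⟩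
  have M_nonneg : 0 ≤ M := (by positivity : (0 : ℝ) ≤ _).trans (hM 0)
  have weighted_le (x : EuclideanSpace ℝ (Fin d)) : ‖jb x ^ δ • f x‖ ≤ (M • w) x := by
    have jb_nonneg : 0 ≤ jb x := Real.sqrt_nonneg _
    calc ‖jb x ^ δ • f x‖ = jb x ^ δ * ‖f x‖ := by
          rw [norm_smul, Real.norm_of_nonneg (Real.rpow_nonneg jb_nonneg δ)]
      _ ≤ (1 + ‖x‖) ^ ⌈|δ|⌉₊ * ‖f x‖ := by
          gcongr
          exact jb_rpow_le_one_add_norm_pow δ x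
      _ = (1 + ‖x‖) ^ (⌈|δ|⌉₊ + l) * ‖f x‖ * w x := by
          simp only [w]
          rw [Real.rpow_neg (by positivity), Real.rpow_natCast]
          field_simp
          ring
      _ ≤ M * w x := by
          gcongr
          exact hM x
  have eLpNorm_smul_w : eLpNorm (M • w) (ENNReal.ofReal p) volume =
      ‖M‖ₑ * eLpNorm w (ENNReal.ofReal p) volume := eLpNorm_const_smul _ _ _ _
  calc wLp p δ f ≤ (eLpNorm (M • w) (ENNReal.ofReal p) volume).toReal :=
        ENNReal.toReal_mono
          (eLpNorm_smul_w ▸ ENNReal.mul_ne_top enorm_ne_top weight_lt_top.ne)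
          (eLpNorm_mono_real weighted_le)
    _ = (eLpNorm w (ENNReal.ofReal p) volume).toReal * M := by
        rw [eLpNorm_smul_w, ENNReal.toReal_mul, toReal_enorm, Real.norm_of_nonneg M_nonneg,
          mul_comm]

theorem wLp_nonneg (p δ : ℝ) (f : EuclideanSpace ℝ (Fin d) → F) : 0 ≤ wLp p δ f :=
  ENNReal.toReal_nonneg

/-- The multi-index derivative `∂^α` as an operator on Schwartz functions, composed in the same
order as in `mderiv`. -/
noncomputable def schwartzMderiv (α : Fin d → ℕ) (f : 𝓢(EuclideanSpace ℝ (Fin d), F)) :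
    𝓢(EuclideanSpace ℝ (Fin d), F) :=
  (List.finRange d).foldr (fun i g => (∂_{EuclideanSpace.single i (1 : ℝ)} ·)^[α i] g) f

theorem semiconj_schwartzMderiv_mderiv
    {T : 𝓢(EuclideanSpace ℝ (Fin d), F) → EuclideanSpace ℝ (Fin d) → F}
    (hT : ∀ i, Function.Semiconj T (∂_{EuclideanSpace.single i (1 : ℝ)} ·) (pderiv' i))
    (α : Fin d → ℕ) : Function.Semiconj T (schwartzMderiv α) (mderiv α) := by
  intro f
  unfold mderiv schwartzMderiv
  induction List.finRange d with
  | nil => rfl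
  | cons i l ih => rw [List.foldr_cons, List.foldr_cons, (hT i).iterate_right (α i), ih]

theorem mderiv_heatDefect (t : ℝ) (α : Fin d → ℕ)
    (f : 𝓢(EuclideanSpace ℝ (Fin d), F)) :
    mderiv α (heatDefect t f) = heatDefect t (schwartzMderiv α f) := by
  refine (semiconj_schwartzMderiv_mderiv (fun i g => funext fun x => ?_) α f).symm
  exact (fderiv_heatDefect_apply t g x (EuclideanSpace.single i 1)).symm

theorem lap_eq_laplacian (f : 𝓢(EuclideanSpace ℝ (Fin d), F)) : lap f = Δ f := by
  ext x
  rw [laplacian_eq_sum (EuclideanSpace.basisFun (Fin d) ℝ), _root_.sum_apply]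
  simp only [EuclideanSpace.basisFun_apply]
  rfl

theorem heatS_eq_heatFlow {t : ℝ} (ht : 0 < t) (v : EuclideanSpace ℝ (Fin d) → ℝ) :
    heatS d t v = heatFlow t v := by
  ext x
  rw [heatS, if_neg ht.ne', heatFlow_eq_integral_heatKernel ht, finrank_euclideanSpace_fin]
  rfl

theorem tendsto_wLp_heatDefect [CompleteSpace F] (p δ : ℝ) (f : 𝓢(EuclideanSpace ℝ (Fin d), F)) :
    Tendsto (fun t => wLp p δ (heatDefect t f)) (𝓝[>] 0) (𝓝 0) := by
  obtain ⟨k, C, wLp_le⟩ := exists_wLp_le_of_pow_mul_norm_le d F p δ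
  obtain ⟨C', defect_le⟩ := exists_pow_mul_norm_heatDefect_le k f
  have bound_tendsto : Tendsto (fun t : ℝ => C * (C' * √(2 * t))) (𝓝[>] 0) (𝓝 0) := by
    have : Continuous fun t : ℝ => C * (C' * √(2 * t)) := by fun_prop
    simpa using (this.tendsto 0).mono_left nhdsWithin_le_nhds
  refine squeeze_zero' (.of_forall fun t => wLp_nonneg _ _ _) ?_ bound_tendsto
  filter_upwards [Ioc_mem_nhdsGT (show (0 : ℝ) < 1 / 2 by norm_num)] with t ht
  exact wLp_le _ _ (defect_le t ht)

theorem tendsto_Hnorm_heatDefect [CompleteSpace F] (m : ℕ) (p δ : ℝ)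
    (f : 𝓢(EuclideanSpace ℝ (Fin d), F)) :
    Tendsto (fun t => Hnorm d m p δ (heatDefect t f)) (𝓝[>] 0) (𝓝 0) := by
  simp only [Hnorm, mderiv_heatDefect]
  simpa using tendsto_finsetSum _ fun (α : Fin d → Fin (m + 1)) _ =>
    tendsto_wLp_heatDefect p δ (schwartzMderiv (fun i => (α i : ℕ)) f)

end WeightedSobolev

theorem stmt4_general {d : ℕ} {p : ℝ} (_hp : 0 < p) (m : ℕ) (δ : ℝ)
    (v : 𝓢(EuclideanSpace ℝ (Fin d), ℝ)) :
    Tendsto (fun t => Hnorm d m p δ (fun x => (heatS d t v x - v x) / t - lap v x))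
      (𝓝[>] 0) (𝓝 0) := by
  refine (tendsto_Hnorm_heatDefect m p δ v).congr' ?_
  filter_upwards [self_mem_nhdsWithin] with t ht
  congr 1 with x
  rw [heatS_eq_heatFlow ht, lap_eq_laplacian, heatDefect, smul_eq_mul, inv_mul_eq_div]

/-- The Laplacian is the generator of the heat semigroup on the weighted Sobolev space:
for smooth compactly supported `v`, `(S(t)v − v)/t → Δv` in `H^{m,p}_δ` as `t → 0⁺`. -/
theorem stmt4 (d : ℕ) (hd : 1 ≤ d) (p : ℝ) (hp : 1 < p) (m : ℕ) (δ : ℝ)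
    (v : EuclideanSpace ℝ (Fin d) → ℝ) (hv : ContDiff ℝ (⊤ : ℕ∞) v) (hv' : HasCompactSupport v) :
    Filter.Tendsto
      (fun t : ℝ => Hnorm d m p δ (fun x => (heatS d t v x - v x) / t - lap v x))
      (nhdsWithin 0 (Set.Ioi 0)) (nhds 0) :=
  stmt4_general (by linarith) m δ (hv'.toSchwartzMap hv)
end

section
/- Let d ≥ 1, 1 < p < ∞ and δ ∈ ℝ. There exists a constant C > 0 such that for every g ∈ C_c^∞(ℝ^d), ‖g‖_{H^{2,p}_δ} ≤ C · ( ‖⟨·⟩^δ Δg‖_{L^p(ℝ^d)} + ‖⟨·⟩^δ g‖_{L^p(ℝ^d)} ). -/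
open MeasureTheory

/-
A Bellman function `Q` on `ℝ²` satisfies `D²Q(z)(w, w) ≥ τ w₁² + τ⁻¹ w₂²` for some `τ = τ(z) > 0`
and `0 ≤ Q(u, v) - Q(0) ≲ |u| ^ p + |v| ^ q` up to a regularisation. Let `u = Δφ` and `v = g` flow
by the heat equation. Then `∫ (Q(u, v) - Q(0))` decreases at the rate
`∑ₖ ∫ D²Q(∂ₖ(u, v), ∂ₖ(u, v))`, and by the AM-GM inequality this dominates `2 ∫ ∂ᵢu ∂ⱼv`.
Integrating by parts, `∫ ∂ᵢ(Δφ) ∂ⱼg = ∫ ∇(∂ᵢ∂ⱼφ) · ∇g`, so the latter is the rate at which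
`∫ ∂ᵢ∂ⱼφ g` decreases to `0` along the flow. Integrating in time,
`∫ ∂ᵢ∂ⱼφ g ≲ ‖Δφ‖ₚ ^ p + ‖g‖_q ^ q`; taking `g` to be a multiple of `∂ᵢ∂ⱼφ |∂ᵢ∂ⱼφ| ^ (p - 2)` gives
the Calderón–Zygmund inequality `‖∂ᵢ∂ⱼφ‖ₚ ≲ ‖Δφ‖ₚ` without singular integrals.

For the weighted estimate apply this to `φ = w f` with `w = ⟨x⟩ ^ δ`. The derivatives of `w` are
bounded by multiples of `w`, so the commutators are of order at most one in `f`, and they are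
absorbed through the interpolation inequality `‖∂ₖφ‖ₚ ≤ t ‖∂ₖ²φ‖ₚ + (2 / t) ‖φ‖ₚ` with `t` small.
-/

open Filter Set ProbabilityTheory
open scoped ContDiff ENNReal Topology RealInnerProductSpace

local notation "𝔼" d:max => EuclideanSpace ℝ (Fin d)

section TestFunctions

variable {d : ℕ} {E E' : Type*} [NormedAddCommGroup E] [NormedSpace ℝ E]
  [NormedAddCommGroup E'] [NormedSpace ℝ E']

/-- Test functions `f ∈ C_c^∞(ℝ^d; E)`, the class in which all estimates are proved. -/
structure IsTestFunction (f : 𝔼 d → E) : Prop where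
  contDiff : ContDiff ℝ ∞ f
  hasCompactSupport : HasCompactSupport f

lemma pderiv'_eq_of_hasFDerivAt {f : 𝔼 d → E} {f' : 𝔼 d →L[ℝ] E} {x : 𝔼 d} (hf : HasFDerivAt f f' x)
    (i : Fin d) : pderiv' i f x = f' (EuclideanSpace.single i 1) := by
  rw [pderiv', hf.fderiv]

lemma contDiff_pderiv' {f : 𝔼 d → E} (hf : ContDiff ℝ ∞ f) (i : Fin d) :
    ContDiff ℝ ∞ (pderiv' i f) :=
  (hf.fderiv_right (by simp)).clm_apply contDiff_const

namespace IsTestFunction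

variable {f : 𝔼 d → E} {g : 𝔼 d → E'}

lemma continuous (hf : IsTestFunction f) : Continuous f := hf.contDiff.continuous

lemma differentiable (hf : IsTestFunction f) : Differentiable ℝ f :=
  hf.contDiff.differentiable (by simp)

lemma memLp (hf : IsTestFunction f) (p : ℝ≥0∞) : MemLp f p :=
  hf.continuous.memLp_of_hasCompactSupport hf.hasCompactSupport

lemma integrable (hf : IsTestFunction f) : Integrable f :=
  hf.continuous.integrable_of_hasCompactSupport hf.hasCompactSupport

lemma exists_norm_le (hf : IsTestFunction f) : ∃ C, ∀ x, ‖f x‖ ≤ C :=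
  hf.hasCompactSupport.exists_bound_of_continuous hf.continuous

lemma fderiv (hf : IsTestFunction f) : IsTestFunction (fderiv ℝ f) :=
  ⟨hf.contDiff.fderiv_right (by simp), hf.hasCompactSupport.fderiv ℝ⟩

lemma pderiv (hf : IsTestFunction f) (i : Fin d) : IsTestFunction (pderiv' i f) :=
  ⟨contDiff_pderiv' hf.contDiff i, hf.hasCompactSupport.fderiv_apply ℝ _⟩

lemma zero : IsTestFunction (0 : 𝔼 d → E) := ⟨contDiff_const, .zero⟩

lemma add {f' : 𝔼 d → E} (hf : IsTestFunction f) (hf' : IsTestFunction f') :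
    IsTestFunction (f + f') :=
  ⟨hf.contDiff.add hf'.contDiff, hf.hasCompactSupport.add hf'.hasCompactSupport⟩

lemma lap (hf : IsTestFunction f) : IsTestFunction (lap f) := by
  have h : _root_.lap f = ∑ i, pderiv' i (pderiv' i f) := by ext x; simp [_root_.lap]
  rw [h]
  exact Finset.sum_induction _ _ (fun _ _ ↦ add) zero fun i _ ↦ (hf.pderiv i).pderiv i

lemma prodMk (hf : IsTestFunction f) (hg : IsTestFunction g) :
    IsTestFunction fun x ↦ (f x, g x) where
  contDiff := hf.contDiff.prodMk hg.contDiff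
  hasCompactSupport := (hf.hasCompactSupport.union hg.hasCompactSupport).of_isClosed_subset
    (isClosed_tsupport _) <| (closure_mono (by
      intro x hx; by_contra! h; simp_all)).trans closure_union.subset

lemma smul {w : 𝔼 d → ℝ} (hf : IsTestFunction f) (hw : ContDiff ℝ ∞ w) :
    IsTestFunction fun x ↦ w x • f x :=
  ⟨hw.smul hf.contDiff, hf.hasCompactSupport.smul_left⟩

lemma pderiv_prodMk (hf : IsTestFunction f) (hg : IsTestFunction g) (i : Fin d) :
    pderiv' i (fun x ↦ (f x, g x)) = fun x ↦ (pderiv' i f x, pderiv' i g x) :=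
  funext fun x ↦ pderiv'_eq_of_hasFDerivAt
    ((hf.differentiable x).hasFDerivAt.prodMk (hg.differentiable x).hasFDerivAt) i

lemma pderiv_pderiv_apply (hf : IsTestFunction f) (i j : Fin d) (x : 𝔼 d) :
    pderiv' i (pderiv' j f) x = _root_.fderiv ℝ (_root_.fderiv ℝ f) x
      (EuclideanSpace.single i 1) (EuclideanSpace.single j 1) := by
  have h := (hf.fderiv.differentiable x).hasFDerivAt.clm_apply
    (hasFDerivAt_const (EuclideanSpace.single j 1) x)
  exact (pderiv'_eq_of_hasFDerivAt h i).trans (by simp)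

lemma pderiv_comm (hf : IsTestFunction f) (i j : Fin d) :
    pderiv' i (pderiv' j f) = pderiv' j (pderiv' i f) := by
  ext x
  have hsymm : IsSymmSndFDerivAt ℝ f x :=
    hf.contDiff.contDiffAt.isSymmSndFDerivAt (by
      simpa using WithTop.coe_le_coe.2 (le_top : (2 : ℕ∞) ≤ ⊤))
  rw [hf.pderiv_pderiv_apply, hf.pderiv_pderiv_apply, hsymm.eq]

lemma pderiv_lap (hf : IsTestFunction f) (i : Fin d) :
    pderiv' i (_root_.lap f) = _root_.lap (pderiv' i f) := by
  ext x
  have h := HasFDerivAt.fun_sum (u := Finset.univ) fun k (_ : k ∈ Finset.univ) ↦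
    (((hf.pderiv k).pderiv k).differentiable x).hasFDerivAt
  rw [← show _ = pderiv' i (_root_.lap f) x from (pderiv'_eq_of_hasFDerivAt h i).symm, sum_apply]
  refine Finset.sum_congr rfl fun k _ ↦ ?_
  rw [← hf.pderiv_comm i k, ← (hf.pderiv k).pderiv_comm i k, pderiv']

end IsTestFunction

end TestFunctions

section Gaussian

variable {V E : Type*} [NormedAddCommGroup V] [InnerProductSpace ℝ V]
  [NormedAddCommGroup E] [NormedSpace ℝ E]

/-- Lebesgue density of the standard Gaussian measure, needed for Gaussian integration by parts. -/
noncomputable def stdGaussianDensity (z : V) : ℝ :=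
  (2 * Real.pi) ^ (-(Module.finrank ℝ V / 2) : ℝ) * Real.exp (-‖z‖ ^ 2 / 2)

lemma stdGaussianDensity_pos (z : V) : 0 < stdGaussianDensity z := by
  unfold stdGaussianDensity; positivity

lemma stdGaussianDensity_le (z : V) :
    stdGaussianDensity z ≤ (2 * Real.pi) ^ (-(Module.finrank ℝ V / 2) : ℝ) :=
  mul_le_of_le_one_right (by positivity) (Real.exp_le_one_iff.2 (by linarith [sq_nonneg ‖z‖]))

lemma continuous_stdGaussianDensity : Continuous (stdGaussianDensity : V → ℝ) := by
  unfold stdGaussianDensity; fun_prop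

lemma hasFDerivAt_stdGaussianDensity (z : V) :
    HasFDerivAt stdGaussianDensity (-stdGaussianDensity z • innerSL ℝ z) z := by
  have h := ((hasStrictFDerivAt_norm_sq z).hasFDerivAt.const_mul (-2⁻¹ : ℝ)).exp.const_mul
    ((2 * Real.pi) ^ (-(Module.finrank ℝ V / 2) : ℝ))
  convert! h using 1
  · ext w; simp only [stdGaussianDensity]; ring_nf
  · ext w; simp [stdGaussianDensity]; ring_nf

variable [FiniteDimensional ℝ V] [MeasurableSpace V] [BorelSpace V]

lemma integrable_stdGaussianDensity : Integrable (stdGaussianDensity : V → ℝ) := by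
  have h := (GaussianFourier.integrable_cexp_neg_mul_sq_norm_add (V := V) (b := 2⁻¹)
    (by simp) 0 0).norm.const_mul ((2 * Real.pi) ^ (-(Module.finrank ℝ V / 2) : ℝ))
  convert! h using 2 with z
  have hexp : -‖z‖ ^ 2 / 2 = -(2⁻¹ * ‖z‖ ^ 2) := by ring
  simp [Complex.norm_exp, stdGaussianDensity, ← Complex.ofReal_pow, hexp]

lemma integral_stdGaussianDensity_smul_cexp_inner (t : V) :
    ∫ z, stdGaussianDensity z • Complex.exp (⟪z, t⟫ * Complex.I) =
      Complex.exp (-‖t‖ ^ 2 / 2) := by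
  have h := GaussianFourier.integral_cexp_neg_mul_sq_norm_add (V := V) (b := 2⁻¹) (by simp)
    Complex.I t
  have hsmul (z : V) : stdGaussianDensity z • Complex.exp (⟪z, t⟫ * Complex.I) =
      (2 * Real.pi : ℂ) ^ (-(Module.finrank ℝ V / 2) : ℂ) *
        Complex.exp (-2⁻¹ * ‖z‖ ^ 2 + Complex.I * ⟪t, z⟫) := by
    rw [Complex.real_smul, stdGaussianDensity, Complex.ofReal_mul, Complex.ofReal_exp,
      Complex.exp_add, Complex.ofReal_cpow (by positivity), real_inner_comm]
    push_cast
    ring_nf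
  simp_rw [hsmul]
  have hπ : (2 * Real.pi : ℂ) ≠ 0 := by simp [Real.pi_ne_zero]
  rw [integral_const_mul, h, ← mul_assoc, div_inv_eq_mul, mul_comm (Real.pi : ℂ),
    ← Complex.cpow_add _ _ hπ, neg_add_cancel, Complex.cpow_zero, one_mul, Complex.I_sq]
  ring_nf

lemma stdGaussian_eq_withDensity_s8 :
    stdGaussian V = volume.withDensity fun z ↦ ENNReal.ofReal (stdGaussianDensity z) := by
  have : IsFiniteMeasure (volume.withDensity fun z : V ↦ ENNReal.ofReal (stdGaussianDensity z)) :=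
    isFiniteMeasure_withDensity_ofReal integrable_stdGaussianDensity.2
  refine Measure.ext_of_charFun (funext fun t ↦ ?_)
  rw [charFun_stdGaussian, charFun_apply, integral_withDensity_eq_integral_toReal_smul
    (by have := continuous_stdGaussianDensity (V := V); fun_prop) (by simp)]
  simp_rw [ENNReal.toReal_ofReal (stdGaussianDensity_pos _).le]
  exact (integral_stdGaussianDensity_smul_cexp_inner t).symm

lemma integral_stdGaussian (F : V → E) :
    ∫ z, F z ∂stdGaussian V = ∫ z, stdGaussianDensity z • F z := by
  rw [stdGaussian_eq_withDensity_s8, integral_withDensity_eq_integral_toReal_smul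
    (by have := continuous_stdGaussianDensity (V := V); fun_prop) (by simp)]
  simp [ENNReal.toReal_ofReal (stdGaussianDensity_pos _).le]

lemma integrable_stdGaussian_iff {F : V → E} :
    Integrable F (stdGaussian V) ↔ Integrable fun z ↦ stdGaussianDensity z • F z := by
  rw [stdGaussian_eq_withDensity_s8, integrable_withDensity_iff_integrable_smul₀'
    (by have := continuous_stdGaussianDensity (V := V); fun_prop) (by simp)]
  simp [ENNReal.toReal_ofReal (stdGaussianDensity_pos _).le]

lemma integral_inner_smul_stdGaussian {F : V → E} {F' : V → V →L[ℝ] E}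
    (hF : ∀ z, HasFDerivAt F (F' z) z) (v : V) (hint : Integrable F (stdGaussian V))
    (hint_inner : Integrable (fun z ↦ ⟪z, v⟫ • F z) (stdGaussian V))
    (hint_deriv : Integrable (fun z ↦ F' z v) (stdGaussian V)) :
    ∫ z, ⟪z, v⟫ • F z ∂stdGaussian V = ∫ z, F' z v ∂stdGaussian V := by
  rw [integrable_stdGaussian_iff] at hint hint_inner hint_deriv
  rw [integral_stdGaussian, integral_stdGaussian]
  have h := integral_bilinear_hasFDerivAt_right_eq_neg_left_of_integrable (μ := volume)
    (B := ContinuousLinearMap.lsmul ℝ ℝ) (f := stdGaussianDensity (V := V)) (g := F) (v := v)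
    (by simpa [mul_smul] using hint_inner.neg) hint_deriv hint
    (fun z _ ↦ hasFDerivAt_stdGaussianDensity z) (fun z _ ↦ hF z)
  simp only [ContinuousLinearMap.lsmul_apply] at h
  rw [h, ← integral_neg]
  simp [mul_smul]

lemma integrable_one_add_mul_norm_pow_stdGaussian {c : ℝ} (hc : 0 ≤ c) (n : ℕ) :
    Integrable (fun z ↦ (1 + c * ‖z‖) ^ n) (stdGaussian V) := by
  have hid : MemLp (fun z : V ↦ ‖z‖) n (stdGaussian V) :=
    (IsGaussian.memLp_id (stdGaussian V) n (by simp)).norm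
  have h := ((memLp_const (1 : ℝ)).add (hid.const_mul c)).integrable_norm_pow'
  refine h.congr (.of_forall fun z ↦ ?_)
  simp only [Pi.add_apply]
  rw [Real.norm_of_nonneg (by positivity)]

end Gaussian

section Averaging

variable {V Y E : Type*} [AddGroup V] [MeasurableSpace V] [MeasurableAdd₂ V] {μ : Measure V}
  [SFinite μ] [μ.IsAddRightInvariant] [MeasurableSpace Y] {ν : Measure Y} [IsProbabilityMeasure ν]
  [NormedAddCommGroup E] [NormedSpace ℝ E]

lemma eLpNorm_integral_comp_add_le {f : V → E} (hf : StronglyMeasurable f) {T : Y → V}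
    (hT : Measurable T) {p : ℝ≥0∞} (hp : 1 ≤ p) (hp' : p ≠ ⊤) :
    eLpNorm (fun x ↦ ∫ y, f (x + T y) ∂ν) p μ ≤ eLpNorm f p μ := by
  have hp0 : p ≠ 0 := (zero_lt_one.trans_le hp).ne'
  have hf' : StronglyMeasurable (Function.uncurry fun x y ↦ f (x + T y)) :=
    hf.comp_measurable (by fun_prop)
  have jensen (x : V) : ‖∫ y, f (x + T y) ∂ν‖ₑ ^ p.toReal ≤ ∫⁻ y, ‖f (x + T y)‖ₑ ^ p.toReal ∂ν := by
    rw [← ENNReal.le_rpow_inv_iff (ENNReal.toReal_pos hp0 hp'), ← one_div]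
    calc ‖∫ y, f (x + T y) ∂ν‖ₑ ≤ eLpNorm (fun y ↦ f (x + T y)) 1 ν := by
          rw [eLpNorm_one_eq_lintegral_enorm]
          exact enorm_integral_le_lintegral_enorm _
      _ ≤ eLpNorm (fun y ↦ f (x + T y)) p ν :=
          eLpNorm_le_eLpNorm_of_exponent_le hp
            (hf.comp_measurable (by fun_prop)).aestronglyMeasurable
      _ = _ := eLpNorm_eq_lintegral_rpow_enorm_toReal hp0 hp'
  rw [eLpNorm_eq_lintegral_rpow_enorm_toReal hp0 hp',
    eLpNorm_eq_lintegral_rpow_enorm_toReal hp0 hp']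
  gcongr ?_ ^ _
  calc ∫⁻ x, ‖∫ y, f (x + T y) ∂ν‖ₑ ^ p.toReal ∂μ
      ≤ ∫⁻ x, ∫⁻ y, ‖f (x + T y)‖ₑ ^ p.toReal ∂ν ∂μ := lintegral_mono jensen
    _ = ∫⁻ y, ∫⁻ x, ‖f (x + T y)‖ₑ ^ p.toReal ∂μ ∂ν :=
        lintegral_lintegral_swap (hf'.enorm.pow_const _).aemeasurable
    _ = ∫⁻ x, ‖f x‖ₑ ^ p.toReal ∂μ := by
        simp [lintegral_add_right_eq_self (fun x ↦ ‖f x‖ₑ ^ p.toReal)]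

end Averaging

section Heat

variable {d : ℕ} {E E' : Type*} [NormedAddCommGroup E] [NormedSpace ℝ E]
  [NormedAddCommGroup E'] [NormedSpace ℝ E'] {f : 𝔼 d → E} {g : 𝔼 d → E'}

/-- Heat flow `s ↦ e^{s²Δ/2} f`. The parameter `s` is the standard deviation of the heat kernel
rather than the time, which makes the flow smooth up to `s = 0`. -/
noncomputable def heat (s : ℝ) (f : 𝔼 d → E) (x : 𝔼 d) : E :=
  ∫ z, f (x + s • z) ∂stdGaussian (𝔼 d)

lemma heat_zero [CompleteSpace E] : heat 0 f = f := by
  ext x; simp [heat]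

lemma norm_heat_le {C : ℝ} (hC : ∀ x, ‖f x‖ ≤ C) (s : ℝ) (x : 𝔼 d) : ‖heat s f x‖ ≤ C := by
  simpa [heat] using norm_integral_le_of_norm_le_const (μ := stdGaussian (𝔼 d))
    (.of_forall fun z ↦ hC (x + s • z))

lemma integrable_inv_one_add_norm_pow :
    Integrable fun x : 𝔼 d ↦ ((1 + ‖x‖) ^ (d + 1))⁻¹ := by
  refine (integrable_one_add_norm (E := 𝔼 d) (μ := volume) (r := d + 1) (by simp)).congr
    (.of_forall fun x ↦ ?_)
  simp only [Real.rpow_neg (by positivity : 0 ≤ 1 + ‖x‖)]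
  exact_mod_cast rfl

lemma one_add_norm_le_mul (s : ℝ) (x z : 𝔼 d) :
    1 + ‖x‖ ≤ (1 + ‖x + s • z‖) * (1 + |s| * ‖z‖) := by
  have h : ‖x‖ ≤ ‖x + s • z‖ + |s| * ‖z‖ := by
    simpa [norm_smul] using norm_le_norm_add_norm_sub' x (x + s • z)
  have : 0 ≤ ‖x + s • z‖ * (|s| * ‖z‖) := by positivity
  linarith

lemma fderiv_apply_eq_sum (f : 𝔼 d → E) (x z : 𝔼 d) :
    fderiv ℝ f x z = ∑ i, z i • pderiv' i f x := by
  conv_lhs => rw [← (EuclideanSpace.basisFun (Fin d) ℝ).sum_repr z, map_sum]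
  simp [pderiv']

namespace IsTestFunction

lemma integrable_comp_add_smul (hf : IsTestFunction f) (s : ℝ) (x : 𝔼 d) :
    Integrable (fun z ↦ f (x + s • z)) (stdGaussian (𝔼 d)) := by
  obtain ⟨C, hC⟩ := hf.exists_norm_le
  have := hf.continuous
  exact .of_bound (by fun_prop) C (.of_forall fun z ↦ hC _)

lemma heat_prodMk [CompleteSpace E] [CompleteSpace E'] (hf : IsTestFunction f)
    (hg : IsTestFunction g) (s : ℝ) (x : 𝔼 d) :
    heat s (fun y ↦ (f y, g y)) x = (heat s f x, heat s g x) :=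
  integral_pair (hf.integrable_comp_add_smul s x) (hg.integrable_comp_add_smul s x)

lemma continuous_heat (hf : IsTestFunction f) :
    Continuous fun y : ℝ × 𝔼 d ↦ heat y.1 f y.2 := by
  obtain ⟨C, hC⟩ := hf.exists_norm_le
  have := hf.continuous
  exact continuous_of_dominated (fun y ↦ by fun_prop) (fun y ↦ .of_forall fun z ↦ hC _)
    (integrable_const C) (.of_forall fun z ↦ by fun_prop)

lemma exists_integrable_norm_heat_le (hf : IsTestFunction f) (S : ℝ) :
    ∃ b : 𝔼 d → ℝ, Integrable b ∧ ∀ s, |s| ≤ S → ∀ x, ‖heat s f x‖ ≤ b x := by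
  let w (x : 𝔼 d) : ℝ := (1 + ‖x‖) ^ (d + 1)
  have hw (x) : 0 < w x := by positivity
  obtain ⟨C, hC⟩ : ∃ C, ∀ x, ‖w x • f x‖ ≤ C :=
    hf.hasCompactSupport.smul_left.exists_bound_of_continuous
      (.smul (by fun_prop) hf.continuous)
  let M := ∫ z, (1 + S * ‖z‖) ^ (d + 1) ∂stdGaussian (𝔼 d)
  refine ⟨fun x ↦ C * M * (w x)⁻¹, integrable_inv_one_add_norm_pow.const_mul _, fun s hs x ↦ ?_⟩
  have hS : 0 ≤ S := (abs_nonneg s).trans hs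
  have hpt (z : 𝔼 d) : ‖w x • f (x + s • z)‖ ≤ C * (1 + S * ‖z‖) ^ (d + 1) := by
    calc ‖w x • f (x + s • z)‖ = w x * ‖f (x + s • z)‖ := by
          rw [norm_smul, Real.norm_of_nonneg (hw x).le]
      _ ≤ ((1 + ‖x + s • z‖) * (1 + S * ‖z‖)) ^ (d + 1) * ‖f (x + s • z)‖ := by
          gcongr
          exact pow_le_pow_left₀ (by positivity)
            ((one_add_norm_le_mul s x z).trans (by gcongr)) _
      _ = ‖w (x + s • z) • f (x + s • z)‖ * (1 + S * ‖z‖) ^ (d + 1) := by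
          rw [norm_smul, Real.norm_of_nonneg (hw _).le, mul_pow]; ring
      _ ≤ C * (1 + S * ‖z‖) ^ (d + 1) := by gcongr; exact hC _
  have h := norm_integral_le_of_norm_le
    ((integrable_one_add_mul_norm_pow_stdGaussian hS (d + 1)).const_mul C) (.of_forall hpt)
  rw [integral_smul, integral_const_mul, norm_smul, Real.norm_of_nonneg (hw x).le] at h
  rwa [le_mul_inv_iff₀' (hw x)]

lemma integrable_heat (hf : IsTestFunction f) (s : ℝ) : Integrable (heat s f) := by
  obtain ⟨b, hb, hle⟩ := hf.exists_integrable_norm_heat_le |s|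
  have hcont : Continuous (heat s f) := hf.continuous_heat.comp (.prodMk_right s)
  exact hb.mono' hcont.aestronglyMeasurable (.of_forall (hle s le_rfl))

lemma hasFDerivAt_heat (hf : IsTestFunction f) (s : ℝ) (x : 𝔼 d) :
    HasFDerivAt (heat s f) (heat s (_root_.fderiv ℝ f) x) x := by
  obtain ⟨C, hC⟩ := hf.fderiv.exists_norm_le
  have := hf.continuous
  refine hasFDerivAt_integral_of_dominated_of_fderiv_le (bound := fun _ ↦ C)
    (F := fun y z ↦ f (y + s • z)) (F' := fun y z ↦ _root_.fderiv ℝ f (y + s • z)) univ_mem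
    (.of_forall fun y ↦ by fun_prop) (hf.integrable_comp_add_smul s x)
    (hf.fderiv.integrable_comp_add_smul s x).aestronglyMeasurable
    (.of_forall fun z y _ ↦ hC _) (integrable_const C) (.of_forall fun z y _ ↦ ?_)
  exact (hf.differentiable (y + s • z)).hasFDerivAt.comp y ((hasFDerivAt_id y).add_const (s • z))

lemma pderiv_heat (hf : IsTestFunction f) (s : ℝ) (i : Fin d) :
    pderiv' i (heat s f) = heat s (pderiv' i f) := by
  ext x
  rw [pderiv'_eq_of_hasFDerivAt (hf.hasFDerivAt_heat s x)]
  exact ContinuousLinearMap.integral_apply (hf.fderiv.integrable_comp_add_smul s x) _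

lemma integrable_coord_smul (hf : IsTestFunction f) (s : ℝ) (x : 𝔼 d) (i : Fin d) :
    Integrable (fun z ↦ z i • f (x + s • z)) (stdGaussian (𝔼 d)) := by
  obtain ⟨C, hC⟩ := hf.exists_norm_le
  have := hf.continuous
  refine (IsGaussian.integrable_id.norm.mul_const C).mono' (by fun_prop) (.of_forall fun z ↦ ?_)
  rw [norm_smul]
  exact mul_le_mul (PiLp.norm_apply_le z i) (hC _) (norm_nonneg _) (norm_nonneg _)

lemma integral_coord_smul_stdGaussian (hf : IsTestFunction f) (s : ℝ) (x : 𝔼 d) (i : Fin d) :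
    ∫ z, z i • f (x + s • z) ∂stdGaussian (𝔼 d) = s • heat s (pderiv' i f) x := by
  have hderiv (z : 𝔼 d) : HasFDerivAt (fun z ↦ f (x + s • z))
      (s • _root_.fderiv ℝ f (x + s • z)) z := by
    have h := (hf.differentiable (x + s • z)).hasFDerivAt.comp z
      (((hasFDerivAt_id z).const_smul s).const_add x)
    rwa [ContinuousLinearMap.comp_smul, ContinuousLinearMap.comp_id] at h
  have hcoord (z : 𝔼 d) : ⟪z, EuclideanSpace.single i 1⟫ = z i := by
    simp [EuclideanSpace.inner_single_right]
  have h := integral_inner_smul_stdGaussian hderiv (EuclideanSpace.single i 1)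
    (hf.integrable_comp_add_smul s x) (by simpa only [hcoord] using hf.integrable_coord_smul s x i)
    (((hf.pderiv i).integrable_comp_add_smul s x).smul s)
  simp only [hcoord, smul_apply, integral_smul] at h
  exact h

lemma integral_fderiv_apply_stdGaussian (hf : IsTestFunction f) (s : ℝ) (x : 𝔼 d) :
    ∫ z, _root_.fderiv ℝ f (x + s • z) z ∂stdGaussian (𝔼 d) = s • heat s (_root_.lap f) x := by
  simp only [fderiv_apply_eq_sum]
  rw [integral_finsetSum _ fun i _ ↦ (hf.pderiv i).integrable_coord_smul s x i]
  simp only [(hf.pderiv _).integral_coord_smul_stdGaussian]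
  rw [← Finset.smul_sum]
  congr 1
  exact (integral_finsetSum _ fun i _ ↦
    ((hf.pderiv i).pderiv i).integrable_comp_add_smul s x).symm

lemma hasDerivAt_heat (hf : IsTestFunction f) (s : ℝ) (x : 𝔼 d) :
    HasDerivAt (fun s ↦ heat s f x) (s • heat s (_root_.lap f) x) s := by
  obtain ⟨C, hC⟩ := hf.fderiv.exists_norm_le
  have := hf.continuous
  have := hf.fderiv.continuous
  rw [← hf.integral_fderiv_apply_stdGaussian]
  refine (hasDerivAt_integral_of_dominated_loc_of_deriv_le (bound := fun z : 𝔼 d ↦ C * ‖z‖)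
    (F := fun t z ↦ f (x + t • z)) (F' := fun t z ↦ _root_.fderiv ℝ f (x + t • z) z)
    univ_mem (.of_forall fun t ↦ by fun_prop) (hf.integrable_comp_add_smul s x) (by fun_prop)
    (.of_forall fun z t _ ↦ ((_root_.fderiv ℝ f _).le_opNorm z).trans (by gcongr; exact hC _))
    (IsGaussian.integrable_id.norm.const_mul C) (.of_forall fun z t _ ↦ ?_)).2
  exact (hf.differentiable _).hasFDerivAt.comp_hasDerivAt t
    (by simpa using ((hasDerivAt_id t).smul_const z).const_add x)

lemma integral_norm_heat_le (hf : IsTestFunction f) (s : ℝ) :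
    ∫ x, ‖heat s f x‖ ≤ ∫ x, ‖f x‖ := by
  rw [← lpNorm_one_eq_integral_norm (hf.integrable_heat s).1,
    ← lpNorm_one_eq_integral_norm hf.integrable.1, ← toReal_eLpNorm (hf.integrable_heat s).1,
    ← toReal_eLpNorm hf.integrable.1]
  exact ENNReal.toReal_mono (hf.memLp 1).2.ne (eLpNorm_integral_comp_add_le
    (hf.continuous.stronglyMeasurable_of_hasCompactSupport hf.hasCompactSupport)
    (T := fun z ↦ s • z) (by fun_prop) le_rfl ENNReal.one_ne_top)

lemma norm_heat_le_integral (hf : IsTestFunction f) {s : ℝ} (hs : s ≠ 0) (x : 𝔼 d) :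
    ‖heat s f x‖ ≤ (2 * Real.pi) ^ (-(d / 2) : ℝ) * (|s ^ d|⁻¹ * ∫ y, ‖f y‖) := by
  have hscale : ∫ z, ‖f (x + s • z)‖ = |s ^ d|⁻¹ * ∫ y, ‖f y‖ := by
    have h := Measure.integral_comp_smul (volume : Measure (𝔼 d)) (fun z ↦ ‖f (x + z)‖) s
    rw [h, integral_add_left_eq_self (fun z ↦ ‖f z‖) x]
    simp
  have hint : Integrable fun z ↦ ‖f (x + s • z)‖ :=
    (hf.integrable.norm.comp_add_left x).comp_smul hs
  rw [heat, integral_stdGaussian, ← hscale, ← integral_const_mul]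
  refine norm_integral_le_of_norm_le (hint.const_mul _) (.of_forall fun z ↦ ?_)
  rw [norm_smul, Real.norm_of_nonneg (stdGaussianDensity_pos z).le]
  gcongr
  simpa using stdGaussianDensity_le z

end IsTestFunction

end Heat

section Entropy

variable {α E E' G : Type*} [MeasurableSpace α] {μ : Measure α} [NormedAddCommGroup E]
  [NormedSpace ℝ E] [FiniteDimensional ℝ E] [NormedAddCommGroup E'] [NormedSpace ℝ E']
  [NormedAddCommGroup G] {f : α → E} {R : ℝ}

lemma exists_norm_le_of_continuous {Φ : E → G} (hΦ : Continuous Φ) (R : ℝ) :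
    ∃ M, ∀ z, ‖z‖ ≤ R → ‖Φ z‖ ≤ M := by
  have := FiniteDimensional.proper ℝ E
  simpa using (isCompact_closedBall (0 : E) R).exists_bound_of_continuousOn hΦ.continuousOn

lemma integrable_clm_comp_apply {Φ : E → E' →L[ℝ] ℝ} (hΦ : Continuous Φ)
    (hf : AEStronglyMeasurable f μ) (hR : ∀ x, ‖f x‖ ≤ R) {w : α → E'} (hw : Integrable w μ) :
    Integrable (fun x ↦ Φ (f x) (w x)) μ := by
  obtain ⟨M, hM⟩ := exists_norm_le_of_continuous hΦ R
  exact (hw.norm.const_mul M).mono' (Continuous.comp_aestronglyMeasurable₂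
    (g := fun (A : E' →L[ℝ] ℝ) y ↦ A y) (by fun_prop) (hΦ.comp_aestronglyMeasurable hf) hw.1)
    (.of_forall fun x ↦ (Φ (f x)).le_of_opNorm_le (hM _ (hR x)) (w x))

variable {Q : E → ℝ}

lemma integrable_comp_sub_comp_zero (hQ : ContDiff ℝ 1 Q) (hf : Integrable f μ)
    (hR : ∀ x, ‖f x‖ ≤ R) : Integrable (fun x ↦ Q (f x) - Q 0) μ := by
  obtain ⟨M, hM⟩ := exists_norm_le_of_continuous (hQ.continuous_fderiv (by simp)) R
  refine (hf.norm.const_mul M).mono'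
    ((hQ.continuous.comp_aestronglyMeasurable hf.aestronglyMeasurable).sub
      aestronglyMeasurable_const) (.of_forall fun x ↦ ?_)
  have h0 : (0 : E) ∈ Metric.closedBall 0 R :=
    Metric.mem_closedBall_self ((norm_nonneg _).trans (hR x))
  have hx : f x ∈ Metric.closedBall 0 R := mem_closedBall_zero_iff.2 (hR x)
  simpa only [sub_zero] using (convex_closedBall 0 R).norm_image_sub_le_of_norm_fderiv_le (𝕜 := ℝ)
    (fun z _ ↦ hQ.differentiable (by simp) z) (fun z hz ↦ hM z (mem_closedBall_zero_iff.1 hz))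
    h0 hx

variable {d : ℕ} {F : 𝔼 d → E}

lemma hasDerivAt_integral_comp_heat (hQ : ContDiff ℝ 1 Q) (hF : IsTestFunction F) (s : ℝ) :
    HasDerivAt (fun s ↦ ∫ x, (Q (heat s F x) - Q 0))
      (∫ x, fderiv ℝ Q (heat s F x) (s • heat s (lap F) x)) s := by
  have := FiniteDimensional.complete ℝ E
  obtain ⟨R, hR⟩ := hF.exists_norm_le
  have hU (t x) : ‖heat t F x‖ ≤ R := norm_heat_le hR t x
  obtain ⟨M, hM⟩ := exists_norm_le_of_continuous (hQ.continuous_fderiv (by simp)) R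
  obtain ⟨b, hb, hle⟩ := hF.lap.exists_integrable_norm_heat_le (|s| + 1)
  have := hF.continuous_heat
  have := hF.lap.continuous_heat
  have := hQ.continuous_fderiv (by simp)
  have := hQ.continuous
  refine (hasDerivAt_integral_of_dominated_loc_of_deriv_le
    (F := fun t x ↦ Q (heat t F x) - Q 0)
    (F' := fun t x ↦ fderiv ℝ Q (heat t F x) (t • heat t (lap F) x))
    (bound := fun x ↦ M * ((|s| + 1) * b x)) (Metric.ball_mem_nhds s one_pos)
    (.of_forall fun t ↦ ?_) ?_ ?_ (.of_forall fun x t ht ↦ ?_) ((hb.const_mul _).const_mul M)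
    (.of_forall fun x t _ ↦ ?_)).2
  · exact Continuous.aestronglyMeasurable (by fun_prop)
  · exact integrable_comp_sub_comp_zero hQ (hF.integrable_heat s) (hU s)
  · exact Continuous.aestronglyMeasurable (by fun_prop)
  · have hts : |t| ≤ |s| + 1 := by
      have := abs_sub_abs_le_abs_sub t s
      rw [Metric.mem_ball, Real.dist_eq] at ht
      linarith
    refine (ContinuousLinearMap.le_of_opNorm_le_of_le _ (hM _ (hU t x)) ?_)
    rw [norm_smul, Real.norm_eq_abs]
    gcongr
    exact hle t hts x
  · exact ((hQ.differentiable (by simp) _).hasFDerivAt.comp_hasDerivAt t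
      (hF.hasDerivAt_heat t x)).sub_const _

lemma integrable_fderiv_comp_heat_apply (hQ : ContDiff ℝ 1 Q) (hF : IsTestFunction F) (s : ℝ)
    {w : 𝔼 d → E} (hw : Integrable w) :
    Integrable fun x ↦ fderiv ℝ Q (heat s F x) (w x) := by
  obtain ⟨R, hR⟩ := hF.exists_norm_le
  exact integrable_clm_comp_apply (hQ.continuous_fderiv (by simp))
    (hF.integrable_heat s).aestronglyMeasurable (norm_heat_le hR s) hw

lemma integrable_fderiv_fderiv_comp_heat_apply (hQ : ContDiff ℝ 2 Q) (hF : IsTestFunction F)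
    (s : ℝ) (k : Fin d) :
    Integrable fun x ↦ fderiv ℝ (fderiv ℝ Q) (heat s F x) (heat s (pderiv' k F) x)
      (heat s (pderiv' k F) x) := by
  have := FiniteDimensional.complete ℝ E
  obtain ⟨R, hR⟩ := (hF.prodMk (hF.pderiv k)).exists_norm_le
  have hQ2 : ContDiff ℝ 1 (fderiv ℝ Q) := hQ.fderiv_right (by norm_num [one_add_one_eq_two])
  have := hQ2.continuous_fderiv (by simp)
  exact integrable_clm_comp_apply (Φ := fun z : E × E ↦ fderiv ℝ (fderiv ℝ Q) z.1 z.2)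
    (f := fun x ↦ (heat s F x, heat s (pderiv' k F) x)) (R := R) (by fun_prop)
    ((hF.integrable_heat s).1.prodMk ((hF.pderiv k).integrable_heat s).1)
    (fun x ↦ hF.heat_prodMk (hF.pderiv k) s x ▸ norm_heat_le hR s x)
    ((hF.pderiv k).integrable_heat s)

lemma integral_fderiv_comp_heat_apply (hQ : ContDiff ℝ 2 Q) (hF : IsTestFunction F) (s : ℝ)
    (k : Fin d) :
    ∫ x, fderiv ℝ Q (heat s F x) (heat s (pderiv' k (pderiv' k F)) x) =
      -∫ x, fderiv ℝ (fderiv ℝ Q) (heat s F x) (heat s (pderiv' k F) x)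
        (heat s (pderiv' k F) x) := by
  have := FiniteDimensional.complete ℝ E
  have hQ1 : ContDiff ℝ 1 Q := hQ.of_le one_le_two
  have hQ2 : ContDiff ℝ 1 (fderiv ℝ Q) := hQ.fderiv_right (by norm_num [one_add_one_eq_two])
  have hderiv (x : 𝔼 d) := (hQ2.differentiable (by simp) _).hasFDerivAt.comp x
    (hF.hasFDerivAt_heat s x)
  have hpderiv (f : 𝔼 d → E) (hf : IsTestFunction f) (x : 𝔼 d) :
      heat s (fderiv ℝ f) x (EuclideanSpace.single k 1) = heat s (pderiv' k f) x := by
    rw [← hf.pderiv_heat, pderiv'_eq_of_hasFDerivAt (hf.hasFDerivAt_heat s x)]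
  have h := integral_bilinear_hasFDerivAt_right_eq_neg_left_of_integrable (μ := volume)
    (B := .id ℝ (E →L[ℝ] ℝ)) (v := EuclideanSpace.single k 1) (g := heat s (pderiv' k F))
    (by simpa [hpderiv _ hF] using integrable_fderiv_fderiv_comp_heat_apply hQ hF s k)
    (by simpa [hpderiv _ (hF.pderiv k)] using
      integrable_fderiv_comp_heat_apply hQ1 hF s (((hF.pderiv k).pderiv k).integrable_heat s))
    (by simpa using integrable_fderiv_comp_heat_apply hQ1 hF s ((hF.pderiv k).integrable_heat s))
    (fun x _ ↦ hderiv x) (fun x _ ↦ (hF.pderiv k).hasFDerivAt_heat s x)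
  simpa [hpderiv _ hF, hpderiv _ (hF.pderiv k)] using h

lemma hasDerivAt_integral_comp_heat_eq_neg_sum (hQ : ContDiff ℝ 2 Q) (hF : IsTestFunction F)
    (s : ℝ) :
    HasDerivAt (fun s ↦ ∫ x, (Q (heat s F x) - Q 0))
      (-s * ∑ k, ∫ x, fderiv ℝ (fderiv ℝ Q) (heat s F x) (heat s (pderiv' k F) x)
        (heat s (pderiv' k F) x)) s := by
  have hQ1 : ContDiff ℝ 1 Q := hQ.of_le one_le_two
  convert hasDerivAt_integral_comp_heat hQ1 hF s using 1
  have hlap (x : 𝔼 d) : heat s (lap F) x = ∑ k, heat s (pderiv' k (pderiv' k F)) x :=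
    integral_finsetSum _ fun k _ ↦ ((hF.pderiv k).pderiv k).integrable_comp_add_smul s x
  simp_rw [map_smul, hlap, map_sum, smul_eq_mul, integral_const_mul]
  rw [integral_finsetSum _ fun k _ ↦ integrable_fderiv_comp_heat_apply hQ1 hF s
    (((hF.pderiv k).pderiv k).integrable_heat s)]
  simp only [integral_fderiv_comp_heat_apply hQ hF, Finset.sum_neg_distrib]
  ring

end Entropy

lemma fderiv_fderiv_apply_eq_of_hasDerivAt {E : Type*} [NormedAddCommGroup E] [NormedSpace ℝ E]
    {Q : E → ℝ} (hQ : ContDiff ℝ 2 Q) {z w : E} {q : ℝ → ℝ} {c : ℝ}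
    (hq : ∀ t, HasDerivAt (fun t : ℝ ↦ Q (z + t • w)) (q t) t) (hc : HasDerivAt q c 0) :
    fderiv ℝ (fderiv ℝ Q) z w w = c := by
  have hline (t : ℝ) : HasDerivAt (fun t : ℝ ↦ z + t • w) w t := by
    simpa using ((hasDerivAt_id t).smul_const w).const_add z
  have hq_eq : q = fun t ↦ fderiv ℝ Q (z + t • w) w := funext fun t ↦ (hq t).unique
    ((hQ.differentiable (by simp) _).hasFDerivAt.comp_hasDerivAt t (hline t))
  have hQ' : Differentiable ℝ (fderiv ℝ Q) :=
    (hQ.fderiv_right (m := 1) (by norm_num [one_add_one_eq_two])).differentiable (by simp)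
  have h : HasDerivAt (fun t : ℝ ↦ fderiv ℝ Q (z + t • w))
      (fderiv ℝ (fderiv ℝ Q) (z + (0 : ℝ) • w) w) 0 :=
    (hQ' _).hasFDerivAt.comp_hasDerivAt 0 (hline 0)
  subst hq_eq
  simpa using (h.clm_apply (hasDerivAt_const 0 w)).unique hc

lemma hasDerivAt_add_mul (a b t : ℝ) : HasDerivAt (fun t ↦ a + t * b) b t := by
  simpa using ((hasDerivAt_id t).mul_const b).const_add a

section Monotonicity

variable {d : ℕ} {f g φ : 𝔼 d → ℝ} {s : ℝ}

namespace IsTestFunction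

lemma integrable_heat_mul (hf : IsTestFunction f) (hg : IsTestFunction g) (s : ℝ) :
    Integrable fun x ↦ heat s f x * heat s g x := by
  obtain ⟨C, hC⟩ := hf.exists_norm_le
  exact (hg.integrable_heat s).bdd_mul (hf.integrable_heat s).1 (.of_forall (norm_heat_le hC s))

lemma integral_heat_mul_pderiv (hf : IsTestFunction f) (hg : IsTestFunction g) (s : ℝ)
    (k : Fin d) :
    ∫ x, heat s f x * heat s (pderiv' k g) x = -∫ x, heat s (pderiv' k f) x * heat s g x := by
  have hf' := (hf.pderiv k).integrable_heat_mul hg s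
  have hg' := hf.integrable_heat_mul (hg.pderiv k) s
  rw [← hf.pderiv_heat] at hf' ⊢
  rw [← hg.pderiv_heat] at hg' ⊢
  exact integral_mul_fderiv_eq_neg_fderiv_mul_of_integrable hf' hg' (hf.integrable_heat_mul hg s)
    (fun x _ ↦ (hf.hasFDerivAt_heat s x).differentiableAt)
    (fun x _ ↦ (hg.hasFDerivAt_heat s x).differentiableAt)

lemma integral_heat_pderiv_mul_pderiv (hf : IsTestFunction f) (hg : IsTestFunction g) (s : ℝ)
    (k j : Fin d) :
    ∫ x, heat s (pderiv' j f) x * heat s (pderiv' k g) x =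
      ∫ x, heat s (pderiv' k f) x * heat s (pderiv' j g) x := by
  rw [(hf.pderiv j).integral_heat_mul_pderiv hg, (hf.pderiv k).integral_heat_mul_pderiv hg,
    hf.pderiv_comm]

lemma sum_integral_heat_pderiv_mul_pderiv (hφ : IsTestFunction φ) (hg : IsTestFunction g) (s : ℝ)
    (i j : Fin d) :
    ∑ k, ∫ x, heat s (pderiv' k (pderiv' i (pderiv' j φ))) x * heat s (pderiv' k g) x =
      ∫ x, heat s (pderiv' i (_root_.lap φ)) x * heat s (pderiv' j g) x := by
  have hlap (x : 𝔼 d) : heat s (pderiv' i (_root_.lap φ)) x =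
      ∑ k, heat s (pderiv' k (pderiv' k (pderiv' i φ))) x := by
    rw [hφ.pderiv_lap]
    exact integral_finsetSum _ fun k _ ↦
      (((hφ.pderiv i).pderiv k).pderiv k).integrable_comp_add_smul s x
  simp_rw [hlap, Finset.sum_mul]
  rw [integral_finsetSum _ fun k _ ↦
    (((hφ.pderiv i).pderiv k).pderiv k).integrable_heat_mul (hg.pderiv j) s]
  refine Finset.sum_congr rfl fun k _ ↦ ?_
  rw [hφ.pderiv_comm i j, (hφ.pderiv i).pderiv_comm k j,
    ((hφ.pderiv i).pderiv k).integral_heat_pderiv_mul_pderiv hg]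

lemma hasDerivAt_integral_heat_mul (hf : IsTestFunction f) (hg : IsTestFunction g) (s : ℝ) :
    HasDerivAt (fun s ↦ ∫ x, heat s f x * heat s g x)
      (-(2 * s) * ∑ k, ∫ x, heat s (pderiv' k f) x * heat s (pderiv' k g) x) s := by
  have hmul (z w : ℝ × ℝ) :
      _root_.fderiv ℝ (_root_.fderiv ℝ fun z : ℝ × ℝ ↦ z.1 * z.2) z w w = 2 * (w.1 * w.2) := by
    refine (fderiv_fderiv_apply_eq_of_hasDerivAt (contDiff_fst.mul contDiff_snd)
      (fun t ↦ (hasDerivAt_add_mul z.1 w.1 t).mul (hasDerivAt_add_mul z.2 w.2 t))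
      (((hasDerivAt_add_mul z.2 w.2 0).const_mul w.1).add
        ((hasDerivAt_add_mul z.1 w.1 0).mul_const w.2))).trans ?_
    ring
  have h := hasDerivAt_integral_comp_heat_eq_neg_sum
    (contDiff_fst.mul contDiff_snd : ContDiff ℝ 2 fun z : ℝ × ℝ ↦ z.1 * z.2) (hf.prodMk hg) s
  simp only [hmul, hf.pderiv_prodMk hg, hf.heat_prodMk hg,
    (hf.pderiv _).heat_prodMk (hg.pderiv _), integral_const_mul, ← Finset.mul_sum] at h
  simpa [mul_assoc, mul_comm, mul_left_comm] using h

lemma tendsto_integral_heat_mul (hd : d ≠ 0) (hf : IsTestFunction f) (hg : IsTestFunction g) :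
    Tendsto (fun s ↦ ∫ x, heat s f x * heat s g x) atTop (𝓝 0) := by
  let c (s : ℝ) := (2 * Real.pi) ^ (-(d / 2) : ℝ) * (|s ^ d|⁻¹ * ∫ y, ‖f y‖)
  have hc : Tendsto (fun s ↦ c s * ∫ x, ‖g x‖) atTop (𝓝 0) := by
    have h : Tendsto (fun s : ℝ ↦ |s ^ d|⁻¹) atTop (𝓝 0) :=
      (tendsto_abs_atTop_atTop.comp (tendsto_pow_atTop hd)).inv_tendsto_atTop
    simpa [c] using ((h.mul_const (∫ y, ‖f y‖)).const_mul
      ((2 * Real.pi) ^ (-(d / 2) : ℝ))).mul_const (∫ x, ‖g x‖)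
  refine squeeze_zero_norm' ((eventually_ne_atTop 0).mono fun s hs ↦ ?_) hc
  calc ‖∫ x, heat s f x * heat s g x‖
      ≤ ∫ x, c s * ‖heat s g x‖ :=
        norm_integral_le_of_norm_le ((hg.integrable_heat s).norm.const_mul _)
          (.of_forall fun x ↦ by
            rw [norm_mul]; gcongr; exact hf.norm_heat_le_integral hs x)
    _ ≤ c s * ∫ x, ‖g x‖ := by
        rw [integral_const_mul]
        exact mul_le_mul_of_nonneg_left (hg.integral_norm_heat_le s) (by positivity)

end IsTestFunction

/-- Bellman functions: the quadratic forms `D²Q` dominate `2 |w₁ w₂|` in a way that is stable under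
summation over `w`, because the weight `τ` depends on the base point only. -/
structure IsBellman (Q : ℝ × ℝ → ℝ) : Prop where
  contDiff : ContDiff ℝ 2 Q
  zero_le (z : ℝ × ℝ) : Q 0 ≤ Q z
  exists_le (z : ℝ × ℝ) : ∃ τ > 0, ∀ w : ℝ × ℝ,
    τ * w.1 ^ 2 + τ⁻¹ * w.2 ^ 2 ≤ fderiv ℝ (fderiv ℝ Q) z w w

namespace IsBellman

variable {Q : ℝ × ℝ → ℝ}

lemma two_mul_le_sum {ι : Type*} [Fintype ι] (hQ : IsBellman Q) (z : ℝ × ℝ) (w : ι → ℝ × ℝ)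
    (i j : ι) : 2 * ((w i).1 * (w j).2) ≤ ∑ k, fderiv ℝ (fderiv ℝ Q) z (w k) (w k) := by
  obtain ⟨τ, hτ, h⟩ := hQ.exists_le z
  have amgm : 2 * ((w i).1 * (w j).2) ≤ τ * (w i).1 ^ 2 + τ⁻¹ * (w j).2 ^ 2 := by
    have : 0 ≤ τ⁻¹ * (τ * (w i).1 - (w j).2) ^ 2 := by positivity
    field_simp at this ⊢
    linarith
  calc 2 * ((w i).1 * (w j).2)
      ≤ ∑ k, τ * (w k).1 ^ 2 + ∑ k, τ⁻¹ * (w k).2 ^ 2 := by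
        refine amgm.trans (add_le_add ?_ ?_)
        · exact Finset.single_le_sum (f := fun k ↦ τ * (w k).1 ^ 2) (fun k _ ↦ by positivity)
            (Finset.mem_univ i)
        · exact Finset.single_le_sum (f := fun k ↦ τ⁻¹ * (w k).2 ^ 2) (fun k _ ↦ by positivity)
            (Finset.mem_univ j)
    _ ≤ ∑ k, fderiv ℝ (fderiv ℝ Q) z (w k) (w k) := by
        rw [← Finset.sum_add_distrib]
        exact Finset.sum_le_sum fun k _ ↦ h (w k)

lemma two_mul_integral_heat_mul_le (hQ : IsBellman Q) (hf : IsTestFunction f)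
    (hg : IsTestFunction g) (s : ℝ) (i j : Fin d) :
    2 * ∫ x, heat s (pderiv' i f) x * heat s (pderiv' j g) x ≤
      ∑ k, ∫ x, fderiv ℝ (fderiv ℝ Q) (heat s (fun y ↦ (f y, g y)) x)
        (heat s (pderiv' k fun y ↦ (f y, g y)) x) (heat s (pderiv' k fun y ↦ (f y, g y)) x) := by
  have hint := integrable_fderiv_fderiv_comp_heat_apply hQ.contDiff (hf.prodMk hg) s
  rw [← integral_finsetSum _ fun k _ ↦ hint k, ← integral_const_mul]
  refine integral_mono (((hf.pderiv i).integrable_heat_mul (hg.pderiv j) s).const_mul 2)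
    (integrable_finsetSum _ fun k _ ↦ hint k) fun x ↦ ?_
  simp only [hf.pderiv_prodMk hg, (hf.pderiv _).heat_prodMk (hg.pderiv _)]
  exact hQ.two_mul_le_sum _ (fun k ↦ (heat s (pderiv' k f) x, heat s (pderiv' k g) x)) i j

theorem integral_pderiv_pderiv_mul_le (hQ : IsBellman Q) (hφ : IsTestFunction φ)
    (hg : IsTestFunction g) (i j : Fin d) :
    ∫ x, pderiv' i (pderiv' j φ) x * g x ≤ ∫ x, (Q (lap φ x, g x) - Q 0) := by
  let F (x : 𝔼 d) := (lap φ x, g x)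
  let Φ (s : ℝ) := ∫ x, (Q (heat s F x) - Q 0)
  let Ψ (s : ℝ) := ∫ x, heat s (pderiv' i (pderiv' j φ)) x * heat s g x
  have hderiv (s : ℝ) := (hasDerivAt_integral_comp_heat_eq_neg_sum hQ.contDiff
    (hφ.lap.prodMk hg) s).sub (((hφ.pderiv j).pderiv i).hasDerivAt_integral_heat_mul hg s)
  have hanti : AntitoneOn (Φ - Ψ) (Ici 0) := by
    refine antitoneOn_of_deriv_nonpos (convex_Ici 0)
      (fun s _ ↦ (hderiv s).continuousAt.continuousWithinAt)
      (fun s _ ↦ (hderiv s).differentiableAt.differentiableWithinAt) fun s hs ↦ ?_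
    rw [interior_Ici, mem_Ioi] at hs
    rw [(hderiv s).deriv, hφ.sum_integral_heat_pderiv_mul_pderiv hg]
    have := mul_le_mul_of_nonneg_left (hQ.two_mul_integral_heat_mul_le hφ.lap hg s i j) hs.le
    linarith
  have hlim : Tendsto (fun s ↦ -Ψ s) atTop (𝓝 0) := by
    simpa using (((hφ.pderiv j).pderiv i).tendsto_integral_heat_mul (Fin.pos i).ne' hg).neg
  have hle : ∀ᶠ s in atTop, -Ψ s ≤ Φ 0 - Ψ 0 := (eventually_ge_atTop 0).mono fun s hs ↦ by
    have hΦ : 0 ≤ Φ s := integral_nonneg fun x ↦ sub_nonneg.2 (hQ.zero_le _)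
    have := hanti self_mem_Ici hs hs
    simp only [Pi.sub_apply] at this
    linarith
  have h0 := sub_nonneg.1 (le_of_tendsto hlim hle)
  simpa only [Φ, Ψ, heat_zero] using h0

end IsBellman

end Monotonicity

section BellmanFunction

/-- The smooth substitute `(t² + η) ^ (r / 2)` for `|t| ^ r`, regularised at scale `η > 0`. -/
noncomputable def regPow (η r t : ℝ) : ℝ := (t ^ 2 + η) ^ (r / 2)

variable {K θ η p q r t : ℝ}

lemma regPow_pos (hη : 0 < η) : 0 < regPow η r t := by
  unfold regPow; positivity

lemma regPow_le_regPow (hη : 0 < η) (hr : 0 ≤ r) {s : ℝ} (h : |s| ≤ |t|) :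
    regPow η r s ≤ regPow η r t := by
  have := sq_le_sq.2 h
  unfold regPow
  gcongr

lemma regPow_mul_eq (hη : 0 < η) : regPow η (r - 2) t * (t ^ 2 + η) = regPow η r t := by
  have h : 0 < t ^ 2 + η := by positivity
  rw [regPow, regPow, ← Real.rpow_add_one h.ne']
  ring_nf

lemma regPow_rpow (hη : 0 < η) (s : ℝ) : regPow η r t ^ s = regPow η (r * s) t := by
  rw [regPow, regPow, ← Real.rpow_mul (by positivity)]
  ring_nf

lemma contDiff_regPow (hη : 0 < η) {n : WithTop ℕ∞} : ContDiff ℝ n (regPow η r) :=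
  ((contDiff_id.pow 2).add contDiff_const).rpow_const_of_ne fun t ↦ by
    simp only [id]; positivity

lemma hasDerivAt_regPow (hη : 0 < η) (t : ℝ) :
    HasDerivAt (regPow η r) (r * (t * regPow η (r - 2) t)) t := by
  have h := ((hasDerivAt_pow 2 t).add_const η).rpow_const (p := r / 2)
    (.inl (by positivity : t ^ 2 + η ≠ 0))
  refine h.congr_deriv ?_
  simp only [regPow, sub_div]
  norm_num
  ring

/-- The second derivative of `regPow η r`, in closed form. -/
noncomputable def regPowHess (η r t : ℝ) : ℝ :=
  r * (regPow η (r - 2) t + (r - 2) * (t ^ 2 * regPow η (r - 4) t))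

lemma hasDerivAt_mul_regPow (hη : 0 < η) (t : ℝ) :
    HasDerivAt (fun t ↦ r * (t * regPow η (r - 2) t)) (regPowHess η r t) t := by
  refine (((hasDerivAt_id t).mul (hasDerivAt_regPow hη t)).const_mul r).congr_deriv ?_
  simp only [regPowHess, id, sub_sub, show (2 : ℝ) + 2 = 4 by norm_num]
  ring

lemma le_regPowHess (hη : 0 < η) (hr : 0 ≤ r) {c : ℝ} (hc : c ≤ 1) (hc' : c ≤ r - 1) :
    r * c * regPow η (r - 2) t ≤ regPowHess η r t := by
  have h := regPow_mul_eq (r := r - 2) (t := t) hη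
  rw [sub_sub] at h
  norm_num at h
  have h₀ := (regPow_pos (r := r - 4) (t := t) hη).le
  rw [regPowHess, mul_assoc, ← h]
  refine mul_le_mul_of_nonneg_left ?_ hr
  nlinarith [mul_nonneg (mul_nonneg (sub_nonneg.2 hc') (sq_nonneg t)) h₀,
    mul_nonneg (mul_nonneg (sub_nonneg.2 hc) hη.le) h₀]

lemma sq_le_mul_regPowHess (hη : 0 < η) (hr : 0 ≤ r) {c : ℝ} (hc₀ : 0 < c) (hc : c ≤ 1)
    (hc' : c ≤ r - 1) :
    (r * (t * regPow η (r - 2) t)) ^ 2 ≤ r / c * (regPow η r t * regPowHess η r t) := by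
  calc (r * (t * regPow η (r - 2) t)) ^ 2
      ≤ r / c * (regPow η (r - 2) t * (t ^ 2 + η) * (r * c * regPow η (r - 2) t)) := by
        have : 0 ≤ r ^ 2 * regPow η (r - 2) t ^ 2 * η := by positivity
        field_simp
        linarith
    _ ≤ _ := by
        rw [regPow_mul_eq hη]
        gcongr
        · exact (regPow_pos hη).le
        · exact le_regPowHess hη hr hc hc'

/-- The sum `(u² + η) ^ (p / 2) + (v² + η) ^ (q / 2)` from which `bellman` is built. -/
noncomputable def bellmanSum (p q η : ℝ) (z : ℝ × ℝ) : ℝ := regPow η p z.1 + regPow η q z.2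

/-- The derivative of `bellmanSum p q η` at `z` in the direction `w`. -/
noncomputable def bellmanSumDeriv (p q η : ℝ) (z w : ℝ × ℝ) : ℝ :=
  p * (z.1 * regPow η (p - 2) z.1) * w.1 + q * (z.2 * regPow η (q - 2) z.2) * w.2

/-- The second derivative of `bellmanSum p q η` at `z`, evaluated at `(w, w)`. -/
noncomputable def bellmanSumHess (p q η : ℝ) (z w : ℝ × ℝ) : ℝ :=
  regPowHess η p z.1 * w.1 ^ 2 + regPowHess η q z.2 * w.2 ^ 2

/-- A Nazarov–Treil–Volberg Bellman function `K S + u² S ^ θ` with `S = |u| ^ p + |v| ^ q`,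
regularised at scale `η`. It is used for conjugate exponents `2 ≤ p` and `q`, with
`θ = 1 - 2 / p`, which makes both terms homogeneous of the same degree as `S`. -/
noncomputable def bellman (K θ p q η : ℝ) (z : ℝ × ℝ) : ℝ :=
  K * bellmanSum p q η z + (z.1 ^ 2 + η) * bellmanSum p q η z ^ θ

lemma bellmanSum_pos (hη : 0 < η) (z : ℝ × ℝ) : 0 < bellmanSum p q η z :=
  add_pos (regPow_pos hη) (regPow_pos hη)

lemma contDiff_bellmanSum (hη : 0 < η) {n : WithTop ℕ∞} : ContDiff ℝ n (bellmanSum p q η) :=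
  ((contDiff_regPow hη).comp contDiff_fst).add ((contDiff_regPow hη).comp contDiff_snd)

lemma contDiff_bellman (hη : 0 < η) {n : WithTop ℕ∞} :
    ContDiff ℝ n (bellman K θ p q η) :=
  (contDiff_const.mul (contDiff_bellmanSum hη)).add (((contDiff_fst.pow 2).add contDiff_const).mul
    ((contDiff_bellmanSum hη).rpow_const_of_ne fun z ↦ (bellmanSum_pos hη z).ne'))

lemma hasDerivAt_bellmanSum (hη : 0 < η) (z w : ℝ × ℝ) (t : ℝ) :
    HasDerivAt (fun t : ℝ ↦ bellmanSum p q η (z + t • w))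
      (bellmanSumDeriv p q η (z + t • w) w) t :=
  ((hasDerivAt_regPow hη _).comp t (hasDerivAt_add_mul z.1 w.1 t)).add
    ((hasDerivAt_regPow hη _).comp t (hasDerivAt_add_mul z.2 w.2 t))

lemma hasDerivAt_bellmanSumDeriv (hη : 0 < η) (z w : ℝ × ℝ) (t : ℝ) :
    HasDerivAt (fun t : ℝ ↦ bellmanSumDeriv p q η (z + t • w) w)
      (bellmanSumHess p q η (z + t • w) w) t := by
  refine ((((hasDerivAt_mul_regPow hη _).comp t (hasDerivAt_add_mul z.1 w.1 t)).mul_const w.1).add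
    (((hasDerivAt_mul_regPow hη _).comp t (hasDerivAt_add_mul z.2 w.2 t)).mul_const
      w.2)).congr_deriv ?_
  simp only [bellmanSumHess, Prod.fst_add, Prod.snd_add, Prod.smul_fst, Prod.smul_snd, smul_eq_mul]
  ring

lemma fderiv_fderiv_bellman_apply (hη : 0 < η) (z w : ℝ × ℝ) :
    fderiv ℝ (fderiv ℝ (bellman K θ p q η)) z w w =
      K * bellmanSumHess p q η z w + 2 * w.1 ^ 2 * bellmanSum p q η z ^ θ +
      4 * z.1 * w.1 * θ * bellmanSum p q η z ^ (θ - 1) * bellmanSumDeriv p q η z w +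
      (z.1 ^ 2 + η) * (θ * bellmanSum p q η z ^ (θ - 1) * bellmanSumHess p q η z w -
        θ * (1 - θ) * bellmanSum p q η z ^ (θ - 2) * bellmanSumDeriv p q η z w ^ 2) := by
  have hu (t : ℝ) := hasDerivAt_add_mul z.1 w.1 t
  have hS (t : ℝ) := hasDerivAt_bellmanSum (p := p) (q := q) hη z w t
  have hSpow (s t : ℝ) := (hS t).rpow_const (p := s) (.inl (bellmanSum_pos hη _).ne')
  refine fderiv_fderiv_apply_eq_of_hasDerivAt (contDiff_bellman hη)
    (fun t ↦ ((hS t).const_mul K).add ((((hu t).pow 2).add_const η).mul (hSpow θ t))) ?_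
  have hT := hasDerivAt_bellmanSumDeriv (p := p) (q := q) hη z w 0
  refine ((hT.const_mul K).add (((((hu 0).pow 1).const_mul 2).mul_const w.1).mul
    (hSpow θ 0) |>.add ((((hu 0).pow 2).add_const η).mul
      ((hT.mul_const θ).mul (hSpow (θ - 1) 0))))).congr_deriv ?_
  simp only [Pi.pow_apply, Pi.mul_apply, zero_smul, zero_mul, add_zero]
  ring_nf

lemma regPowHess_nonneg (hη : 0 < η) (hr : 1 ≤ r) : 0 ≤ regPowHess η r t := by
  simpa using le_regPowHess (t := t) hη (by linarith) zero_le_one (sub_nonneg.2 hr)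

lemma le_bellmanSumHess (hη : 0 < η) (hpq : p.HolderConjugate q) (hq : q ≤ 2) (z w : ℝ × ℝ) :
    q * (q - 1) * regPow η (q - 2) z.2 * w.2 ^ 2 ≤ bellmanSumHess p q η z w := by
  have hP := mul_nonneg (regPowHess_nonneg (t := z.1) hη hpq.lt.le) (sq_nonneg w.1)
  have hQ := mul_le_mul_of_nonneg_right
    (le_regPowHess (t := z.2) hη hpq.symm.nonneg (by linarith) le_rfl) (sq_nonneg w.2)
  unfold bellmanSumHess
  linarith

lemma bellmanSumDeriv_sq_le (hη : 0 < η) (hpq : p.HolderConjugate q) (hp : 2 ≤ p) (hq : q ≤ 2)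
    (z w : ℝ × ℝ) :
    bellmanSumDeriv p q η z w ^ 2 ≤ p * (bellmanSum p q η z * bellmanSumHess p q η z w) := by
  have hP := sq_le_mul_regPowHess (t := z.1) hη hpq.nonneg one_pos le_rfl (by linarith)
  have hQ := sq_le_mul_regPowHess (t := z.2) hη hpq.symm.nonneg hpq.symm.sub_one_pos
    (by linarith) le_rfl
  rw [div_one] at hP
  rw [← hpq.symm.conjugate_eq] at hQ
  have hP₀ := regPowHess_nonneg (t := z.1) hη hpq.lt.le
  have hQ₀ := regPowHess_nonneg (t := z.2) hη hpq.symm.lt.le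
  have := Finset.sum_sq_le_sum_mul_sum_of_sq_le_mul Finset.univ
    (r := ![p * (z.1 * regPow η (p - 2) z.1) * w.1, q * (z.2 * regPow η (q - 2) z.2) * w.2])
    (f := ![regPow η p z.1, regPow η q z.2])
    (g := ![p * (regPowHess η p z.1 * w.1 ^ 2), p * (regPowHess η q z.2 * w.2 ^ 2)])
    (by simp [Fin.forall_fin_two, (regPow_pos hη).le])
    (by simpa [Fin.forall_fin_two] using ⟨mul_nonneg hpq.nonneg (mul_nonneg hP₀ (sq_nonneg _)),
      mul_nonneg hpq.nonneg (mul_nonneg hQ₀ (sq_nonneg _))⟩)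
    (by
      simp only [Finset.mem_univ, Fin.forall_fin_two, Matrix.cons_val_zero, Matrix.cons_val_one,
        forall_const]
      constructor <;> nlinarith [sq_nonneg w.1, sq_nonneg w.2])
  simp only [Fin.sum_univ_two, Matrix.cons_val_zero, Matrix.cons_val_one] at this
  rw [bellmanSumDeriv, bellmanSum, bellmanSumHess]
  linarith

lemma sq_add_le_bellmanSum_rpow (hη : 0 < η) (hp : 0 < p) (z : ℝ × ℝ) :
    z.1 ^ 2 + η ≤ bellmanSum p q η z ^ (2 / p) := by
  have h := regPow_rpow (r := p) (t := z.1) hη (2 / p)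
  rw [mul_div_cancel₀ _ hp.ne', regPow, regPow, div_self two_ne_zero, Real.rpow_one] at h
  rw [← h]
  have := (regPow_pos (r := q) (t := z.2) hη).le
  exact Real.rpow_le_rpow (by positivity) (le_add_of_nonneg_right this) (by positivity)

lemma one_sub_two_div_nonneg (hp : 2 ≤ p) : 0 ≤ 1 - 2 / p :=
  sub_nonneg.2 ((div_le_one (two_pos.trans_le hp)).2 hp)

lemma inv_bellmanSum_rpow_le (hη : 0 < η) (hpq : p.HolderConjugate q) (hp : 2 ≤ p)
    (z : ℝ × ℝ) : (bellmanSum p q η z ^ (1 - 2 / p))⁻¹ ≤ regPow η (q - 2) z.2 := by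
  have hexp : q - 2 = q * -(1 - 2 / p) := by
    have := hpq.mul_eq_add
    have := hpq.pos
    field_simp
    linarith
  have hG := regPow_pos (r := q) (t := z.2) hη
  rw [hexp, ← regPow_rpow hη, Real.rpow_neg hG.le]
  gcongr
  · exact one_sub_two_div_nonneg hp
  · exact le_add_of_nonneg_left (regPow_pos hη).le

lemma le_bellman_hessian {X S R T x A m : ℝ} (hX : x ^ 2 ≤ X) (hS : 0 < S) (hR : 0 ≤ R)
    (hT : T ^ 2 ≤ p * (S * R)) (hm : 0 ≤ m) (hmX : X * m ≤ 1) (hθ : 0 ≤ θ)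
    (hθ₁ : θ ≤ 1) :
    (K - 5 * p) * R + m * S * A ^ 2 ≤
      K * R + 2 * A ^ 2 * (m * S) + 4 * x * A * θ * m * T +
        X * (θ * m * R - θ * (1 - θ) * (m / S) * T ^ 2) := by
  have hX₀ : 0 ≤ X := (sq_nonneg x).trans hX
  have hE : X * m * (T ^ 2 / S) ≤ p * R := by
    have : T ^ 2 / S ≤ p * R := by rw [div_le_iff₀ hS]; linarith
    exact (mul_le_of_le_one_left (by positivity) hmX).trans this
  have hcross : 4 * θ ^ 2 * (x ^ 2 * m * (T ^ 2 / S)) ≤ 4 * 1 * (p * R) :=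
    mul_le_mul (by gcongr; exact pow_le_one₀ hθ hθ₁) (hE.trans' (by gcongr)) (by positivity)
      (by norm_num)
  have hconc : θ * (1 - θ) * (X * m * (T ^ 2 / S)) ≤ 1 * (p * R) := by
    gcongr
    nlinarith
  have hsq : 0 ≤ m * S * (A + 2 * x * θ * T / S) ^ 2 := by positivity
  have hlin : 0 ≤ X * θ * m * R := by positivity
  have hexpand : m * S * (A + 2 * x * θ * T / S) ^ 2 = m * S * A ^ 2 + 4 * x * A * θ * m * T +
      4 * θ ^ 2 * (x ^ 2 * m * (T ^ 2 / S)) := by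
    field_simp
    ring
  have hconc' : X * (θ * (1 - θ) * (m / S) * T ^ 2) = θ * (1 - θ) * (X * m * (T ^ 2 / S)) := by
    ring
  linarith

lemma add_le_fderiv_fderiv_bellman_apply (hη : 0 < η) (hpq : p.HolderConjugate q) (hp : 2 ≤ p)
    (z w : ℝ × ℝ) :
    bellmanSum p q η z ^ (1 - 2 / p) * w.1 ^ 2 +
      (bellmanSum p q η z ^ (1 - 2 / p))⁻¹ * w.2 ^ 2 ≤
    fderiv ℝ (fderiv ℝ (bellman (5 * p + (q * (q - 1))⁻¹) (1 - 2 / p) p q η)) z w w := by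
  have hq : q ≤ 2 := by have := hpq.div_conj_eq_sub_one; have := hpq.mul_eq_add; nlinarith
  have hq₀ : 0 < q * (q - 1) := mul_pos hpq.symm.pos hpq.symm.sub_one_pos
  have hS := bellmanSum_pos (p := p) (q := q) hη z
  have hR := le_bellmanSumHess hη hpq hq z w
  have hR₀ : 0 ≤ bellmanSumHess p q η z w := hR.trans'
    (mul_nonneg (mul_nonneg hq₀.le (regPow_pos hη).le) (sq_nonneg _))
  have hB : (bellmanSum p q η z ^ (1 - 2 / p))⁻¹ * w.2 ^ 2 ≤
      (q * (q - 1))⁻¹ * bellmanSumHess p q η z w := by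
    rw [inv_mul_eq_div _ (bellmanSumHess p q η z w), le_div_iff₀ hq₀]
    have := mul_le_mul_of_nonneg_right (inv_bellmanSum_rpow_le hη hpq hp z)
      (mul_nonneg hq₀.le (sq_nonneg w.2))
    linarith
  have hmX : (z.1 ^ 2 + η) * bellmanSum p q η z ^ (1 - 2 / p - 1) ≤ 1 := by
    rw [sub_sub_cancel_left, Real.rpow_neg hS.le, ← div_eq_mul_inv, div_le_one (by positivity)]
    exact sq_add_le_bellmanSum_rpow hη hpq.pos z
  have key := le_bellman_hessian (K := 5 * p + (q * (q - 1))⁻¹) (A := w.1)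
    (le_add_of_nonneg_right hη.le) hS hR₀
    (bellmanSumDeriv_sq_le hη hpq hp hq z w) (by positivity) hmX (one_sub_two_div_nonneg hp)
    (sub_le_self _ (div_nonneg zero_le_two hpq.nonneg))
  rw [← Real.rpow_add_one hS.ne', ← Real.rpow_sub_one hS.ne', sub_add_cancel, sub_sub _ 1 1,
    one_add_one_eq_two, add_sub_cancel_left] at key
  rw [fderiv_fderiv_bellman_apply hη]
  linarith

lemma bellman_zero_le (hη : 0 < η) (hK : 0 ≤ K) (hθ : 0 ≤ θ) (hp : 0 ≤ p) (hq : 0 ≤ q)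
    (z : ℝ × ℝ) : bellman K θ p q η 0 ≤ bellman K θ p q η z := by
  have hsq : (0 : ℝ × ℝ).1 ^ 2 ≤ z.1 ^ 2 := by simpa using sq_nonneg z.1
  have hS : bellmanSum p q η 0 ≤ bellmanSum p q η z :=
    add_le_add (regPow_le_regPow hη hp (by simp)) (regPow_le_regPow hη hq (by simp))
  have hS₀ := (bellmanSum_pos (p := p) (q := q) hη 0).le
  unfold bellman
  gcongr

lemma bellman_sub_le (hη : 0 < η) (hK : 0 ≤ K) (hp : 0 < p) (z : ℝ × ℝ) :
    bellman K (1 - 2 / p) p q η z - bellman K (1 - 2 / p) p q η 0 ≤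
      (K + 1) * bellmanSum p q η z := by
  have hS (z : ℝ × ℝ) := bellmanSum_pos (p := p) (q := q) hη z
  have h₀ : 0 ≤ bellman K (1 - 2 / p) p q η 0 := by
    have := hS 0
    unfold bellman
    positivity
  have h₁ := mul_le_mul_of_nonneg_right (sq_add_le_bellmanSum_rpow (q := q) hη hp z)
    (Real.rpow_nonneg (hS z).le (1 - 2 / p))
  rw [← Real.rpow_add (hS z), add_sub_cancel, Real.rpow_one] at h₁
  rw [bellman] at h₀ ⊢
  rw [bellman]
  linarith

lemma bellman_const_pos (hpq : p.HolderConjugate q) : 0 < 5 * p + (q * (q - 1))⁻¹ :=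
  add_pos (mul_pos (by norm_num) hpq.pos)
    (inv_pos.2 (mul_pos hpq.symm.pos hpq.symm.sub_one_pos))

theorem isBellman_bellman (hη : 0 < η) (hpq : p.HolderConjugate q) (hp : 2 ≤ p) :
    IsBellman (bellman (5 * p + (q * (q - 1))⁻¹) (1 - 2 / p) p q η) where
  contDiff := contDiff_bellman hη
  zero_le := bellman_zero_le hη (bellman_const_pos hpq).le (one_sub_two_div_nonneg hp)
    hpq.nonneg hpq.symm.nonneg
  exists_le z := ⟨_, Real.rpow_pos_of_pos (bellmanSum_pos hη z) _,
    add_le_fderiv_fderiv_bellman_apply hη hpq hp z⟩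

lemma IsBellman.comp_swap {Q : ℝ × ℝ → ℝ} (hQ : IsBellman Q) : IsBellman (Q ∘ Prod.swap) where
  contDiff := hQ.contDiff.comp (ContinuousLinearEquiv.prodComm ℝ ℝ ℝ).contDiff
  zero_le z := hQ.zero_le z.swap
  exists_le z := by
    obtain ⟨τ, hτ, h⟩ := hQ.exists_le z.swap
    refine ⟨τ⁻¹, inv_pos.2 hτ, fun w ↦ ?_⟩
    have hswap : fderiv ℝ (fderiv ℝ (Q ∘ Prod.swap)) z w w =
        fderiv ℝ (fderiv ℝ Q) z.swap w.swap w.swap := by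
      have : iteratedFDeriv ℝ 2 (Q ∘ Prod.swap) z = _ :=
        (ContinuousLinearEquiv.prodComm ℝ ℝ ℝ).toContinuousLinearMap.iteratedFDeriv_comp_right
          hQ.contDiff z le_rfl
      simpa [iteratedFDeriv_two_apply] using DFunLike.congr_fun this ![w, w]
    rw [hswap, inv_inv, add_comm]
    exact h w.swap

theorem exists_isBellman (hpq : p.HolderConjugate q) :
    ∃ C > 0, ∀ η > 0, ∃ Q, IsBellman Q ∧
      ∀ u v, Q (u, v) - Q 0 ≤ C * (regPow η p u + regPow η q v) := by
  wlog hp : 2 ≤ p generalizing p q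
  · have hq : 2 ≤ q := by
      have := hpq.div_conj_eq_sub_one; have := hpq.mul_eq_add; nlinarith [hpq.pos, hpq.symm.pos]
    obtain ⟨C, hC, h⟩ := this hpq.symm hq
    refine ⟨C, hC, fun η hη ↦ ?_⟩
    obtain ⟨Q, hQ, hle⟩ := h η hη
    exact ⟨Q ∘ Prod.swap, hQ.comp_swap, fun u v ↦ (hle v u).trans_eq (by rw [add_comm])⟩
  have hK := bellman_const_pos hpq
  exact ⟨_, add_pos hK one_pos, fun η hη ↦ ⟨_, isBellman_bellman hη hpq hp,
    fun u v ↦ bellman_sub_le hη hK.le hpq.pos (u, v)⟩⟩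

end BellmanFunction

section Duality

variable {p q r η : ℝ} {d : ℕ}

lemma continuous_uncurry_regPow (hr : 0 ≤ r) : Continuous fun z : ℝ × ℝ ↦ regPow z.1 r z.2 :=
  ((continuous_snd.pow 2).add continuous_fst).rpow_const fun _ ↦ .inr (by positivity)

lemma regPow_zero (t : ℝ) : regPow 0 r t = |t| ^ r := by
  rw [regPow, add_zero, ← sq_abs, ← Real.rpow_natCast, ← Real.rpow_mul (abs_nonneg t)]
  congr 1
  push_cast
  ring

lemma tendsto_setIntegral_regPow {X : Type*} [TopologicalSpace X] [MeasurableSpace X]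
    [OpensMeasurableSpace X] {μ : Measure X} [IsLocallyFiniteMeasure μ] (hr : 0 ≤ r) {f : X → ℝ}
    (hf : Continuous f) {T : Set X} (hT : IsCompact T) :
    Tendsto (fun η ↦ ∫ x in T, regPow η r (f x) ∂μ) (𝓝[>] 0) (𝓝 (∫ x in T, |f x| ^ r ∂μ)) := by
  have h := (continuous_parametric_integral_of_continuous (μ := μ) (f := fun η x ↦ regPow η r (f x))
    ((continuous_uncurry_regPow hr).comp
      (continuous_fst.prodMk (hf.comp continuous_snd))) hT).tendsto 0
  simp only [regPow_zero] at h
  exact h.mono_left nhdsWithin_le_nhds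

lemma tendsto_sq_mul_regPow (hr : r ≠ 0) (t : ℝ) :
    Tendsto (fun η ↦ t ^ 2 * regPow η (r - 2) t) (𝓝[>] 0) (𝓝 (|t| ^ r)) := by
  refine Tendsto.mono_left ?_ nhdsWithin_le_nhds
  rcases eq_or_ne t 0 with rfl | ht
  · simp [hr]
  have h : ContinuousAt (fun η ↦ t ^ 2 * regPow η (r - 2) t) 0 :=
    ((continuousAt_const.add continuousAt_id).rpow_const (.inl (by simpa using ht))).const_mul _
  convert h.tendsto using 2
  rw [regPow_zero, Real.rpow_sub (abs_pos.2 ht), Real.rpow_two, sq_abs]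
  field_simp

lemma setIntegral_abs_rpow_eq {f : 𝔼 d → ℝ} {T : Set (𝔼 d)} (hT : tsupport f ⊆ T)
    (hr : r ≠ 0) : ∫ x in T, |f x| ^ r = ∫ x, |f x| ^ r :=
  setIntegral_eq_integral_of_forall_compl_eq_zero fun x hx ↦ by
    rw [image_eq_zero_of_notMem_tsupport (notMem_subset hT hx), abs_zero, Real.zero_rpow hr]

theorem exists_integral_pderiv_pderiv_mul_le (hpq : p.HolderConjugate q) :
    ∃ C > 0, ∀ {d : ℕ} {φ g : 𝔼 d → ℝ}, IsTestFunction φ → IsTestFunction g → ∀ i j,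
      ∫ x, pderiv' i (pderiv' j φ) x * g x ≤ C * ((∫ x, |lap φ x| ^ p) + ∫ x, |g x| ^ q) := by
  obtain ⟨C, hC, hQ⟩ := exists_isBellman hpq
  refine ⟨C, hC, fun {d φ g} hφ hg i j ↦ ?_⟩
  set T := tsupport (lap φ) ∪ tsupport g
  have hT : IsCompact T := hφ.lap.hasCompactSupport.union hg.hasCompactSupport
  have hlim := ((tendsto_setIntegral_regPow (μ := volume) hpq.nonneg hφ.lap.continuous hT).add
    (tendsto_setIntegral_regPow (μ := volume) hpq.symm.nonneg hg.continuous hT)).const_mul C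
  rw [setIntegral_abs_rpow_eq subset_union_left hpq.ne_zero,
    setIntegral_abs_rpow_eq subset_union_right hpq.symm.ne_zero] at hlim
  refine ge_of_tendsto hlim (eventually_mem_nhdsWithin.mono fun η hη ↦ ?_)
  obtain ⟨Q, hQ, hQle⟩ := hQ η hη
  have hint {r : ℝ} {f : 𝔼 d → ℝ} (hf : Continuous f) :
      IntegrableOn (fun x ↦ regPow η r (f x)) T :=
    (((contDiff_regPow (n := 0) hη).continuous).comp hf).continuousOn.integrableOn_compact hT
  have hintQ : IntegrableOn (fun x ↦ Q (lap φ x, g x) - Q 0) T :=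
    ((hQ.contDiff.continuous.comp (hφ.lap.continuous.prodMk hg.continuous)).sub
      continuous_const).continuousOn.integrableOn_compact hT
  calc ∫ x, pderiv' i (pderiv' j φ) x * g x
      ≤ ∫ x, (Q (lap φ x, g x) - Q 0) := hQ.integral_pderiv_pderiv_mul_le hφ hg i j
    _ = ∫ x in T, (Q (lap φ x, g x) - Q 0) :=
        (setIntegral_eq_integral_of_forall_compl_eq_zero fun x hx ↦ by
          rw [mem_union, not_or] at hx
          rw [image_eq_zero_of_notMem_tsupport hx.1, image_eq_zero_of_notMem_tsupport hx.2,
            Prod.mk_zero_zero, sub_self]).symm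
    _ ≤ ∫ x in T, C * (regPow η p (lap φ x) + regPow η q (g x)) :=
        integral_mono hintQ (((hint hφ.lap.continuous).add (hint hg.continuous)).const_mul C)
          fun x ↦ hQle _ _
    _ = _ := by
        rw [integral_const_mul, integral_add (hint hφ.lap.continuous) (hint hg.continuous)]

lemma tendsto_integral_sq_mul_regPow {X : Type*} [TopologicalSpace X] [MeasurableSpace X]
    [OpensMeasurableSpace X] {μ : Measure X} [IsFiniteMeasureOnCompacts μ] (hr : 0 < r) {f : X → ℝ}
    (hf : Continuous f) (hf' : HasCompactSupport f) :
    Tendsto (fun η ↦ ∫ x, f x ^ 2 * regPow η (r - 2) (f x) ∂μ) (𝓝[>] 0)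
      (𝓝 (∫ x, |f x| ^ r ∂μ)) := by
  have hreg {s : ℝ} {η : ℝ} (hη : 0 < η) : Continuous fun x ↦ regPow η s (f x) :=
    (contDiff_regPow (n := 0) hη).continuous.comp hf
  have hbound (η : ℝ) (hη : 0 < η ∧ η ≤ 1) (x : X) :
      ‖f x ^ 2 * regPow η (r - 2) (f x)‖ ≤
        (tsupport f).indicator (fun x ↦ regPow 1 r (f x)) x := by
    by_cases hx : x ∈ tsupport f
    · have hreg₀ := (regPow_pos (r := r - 2) (t := f x) hη.1).le
      rw [indicator_of_mem hx, Real.norm_of_nonneg (by positivity)]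
      calc f x ^ 2 * regPow η (r - 2) (f x) ≤ regPow η (r - 2) (f x) * (f x ^ 2 + η) := by
            linarith [mul_nonneg hreg₀ hη.1.le]
        _ = regPow η r (f x) := regPow_mul_eq hη.1
        _ ≤ regPow 1 r (f x) := by
            unfold regPow
            gcongr
            · linarith [hη.1, sq_nonneg (f x)]
            · exact hη.2
    · simp [hx, image_eq_zero_of_notMem_tsupport hx]
  have hmem : ∀ᶠ η in 𝓝[>] (0 : ℝ), 0 < η ∧ η ≤ 1 := Ioc_mem_nhdsGT one_pos
  refine tendsto_integral_filter_of_dominated_convergence _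
    (hmem.mono fun η hη ↦ ?_) (hmem.mono fun η hη ↦ .of_forall (hbound η hη)) ?_
    (.of_forall fun x ↦ tendsto_sq_mul_regPow hr.ne' (f x))
  · exact (((hf.pow 2).mul (hreg hη.1)).stronglyMeasurable_of_hasCompactSupport
      (HasCompactSupport.mul_right (hf'.comp_left (zero_pow two_ne_zero)))).aestronglyMeasurable
  · have hmeas := (isClosed_tsupport f).measurableSet
    rw [integrable_indicator_iff hmeas]
    exact (hreg one_pos).continuousOn.integrableOn_compact' hf' hmeas

lemma abs_mul_regPow_rpow_le (hη : 0 < η) (hpq : p.HolderConjugate q) (t : ℝ) :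
    |t * regPow η (p - 2) t| ^ q ≤ regPow η p t := by
  have hq := hpq.symm.nonneg
  have ht : |t| ≤ regPow η 1 t := by
    rw [regPow, ← Real.sqrt_eq_rpow, ← Real.sqrt_sq_eq_abs]
    exact Real.sqrt_le_sqrt (by linarith)
  calc |t * regPow η (p - 2) t| ^ q
      ≤ (regPow η 1 t * regPow η (p - 2) t) ^ q := by
        rw [abs_mul, abs_of_pos (regPow_pos (r := p - 2) hη)]
        have := (regPow_pos (r := p - 2) (t := t) hη).le
        gcongr
    _ = regPow η p t := by
        have h : 0 < t ^ 2 + η := by positivity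
        have hexp : (1 / 2 + (p - 2) / 2) * q = p / 2 := by
          have := hpq.sub_one_mul_conj
          linarith
        rw [regPow, regPow, ← Real.rpow_add h, ← Real.rpow_mul h.le, hexp, regPow]

lemma mul_integral_sq_mul_regPow_le (hη : 0 < η) (hpq : p.HolderConjugate q)
    {f : 𝔼 d → ℝ} (hf : IsTestFunction f) {C A l : ℝ} (hC : 0 ≤ C) (hl : 0 ≤ l)
    (h : ∀ g, IsTestFunction g → ∫ x, f x * g x ≤ C * (A + ∫ x, |g x| ^ q)) :
    l * ∫ x, f x ^ 2 * regPow η (p - 2) (f x) ≤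
      C * (A + l ^ q * ∫ x in tsupport f, regPow η p (f x)) := by
  set g := fun x ↦ (l * regPow η (p - 2) (f x)) • f x
  have hg : IsTestFunction g :=
    hf.smul (contDiff_const.mul ((contDiff_regPow hη).comp hf.contDiff))
  have habs (x) : |g x| ^ q ≤ l ^ q * regPow η p (f x) := by
    have hgx : |g x| = l * |f x * regPow η (p - 2) (f x)| := by
      simp only [g, smul_eq_mul]
      rw [mul_assoc, abs_mul, abs_of_nonneg hl, mul_comm (f x)]
    rw [hgx, Real.mul_rpow hl (abs_nonneg _)]
    exact mul_le_mul_of_nonneg_left (abs_mul_regPow_rpow_le hη hpq (f x)) (by positivity)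
  have hgq : ∫ x, |g x| ^ q ≤ l ^ q * ∫ x in tsupport f, regPow η p (f x) := by
    rw [← setIntegral_abs_rpow_eq (tsupport_smul_subset_right _ f) hpq.symm.ne_zero,
      ← integral_const_mul]
    have hcont : Continuous fun x ↦ regPow η p (f x) :=
      (contDiff_regPow (n := 0) hη).continuous.comp hf.continuous
    exact integral_mono ((hg.continuous.abs.rpow_const fun _ ↦
      .inr hpq.symm.nonneg).continuousOn.integrableOn_compact hf.hasCompactSupport)
      ((continuous_const.mul hcont).continuousOn.integrableOn_compact hf.hasCompactSupport) habs
  calc l * ∫ x, f x ^ 2 * regPow η (p - 2) (f x) = ∫ x, f x * g x := by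
        rw [← integral_const_mul]
        congr with x
        simp only [g, smul_eq_mul]
        ring
    _ ≤ C * (A + ∫ x, |g x| ^ q) := h g hg
    _ ≤ _ := by gcongr

theorem integral_abs_rpow_le_of_forall_integral_mul_le (hpq : p.HolderConjugate q)
    {f : 𝔼 d → ℝ} (hf : IsTestFunction f) {C A : ℝ} (hC : 0 < C)
    (h : ∀ g, IsTestFunction g → ∫ x, f x * g x ≤ C * (A + ∫ x, |g x| ^ q)) :
    ∫ x, |f x| ^ p ≤ (2 * C) ^ p * A := by
  obtain ⟨l, hl⟩ : ∃ l, l = (2 * C) ^ (1 - p) := ⟨_, rfl⟩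
  have hl₀ : 0 < l := by rw [hl]; positivity
  -- This choice of `l` makes the last term of `hlim` half of the left-hand side.
  have hlq : C * l ^ q = l / 2 := by
    have hexp : (1 - p) * q = 1 - p - 1 := by linarith [hpq.mul_eq_add]
    rw [hl, ← Real.rpow_mul (by positivity), hexp, Real.rpow_sub_one (by positivity)]
    field_simp
  have hlim : l * ∫ x, |f x| ^ p ≤ C * (A + l ^ q * ∫ x, |f x| ^ p) := by
    rw [← setIntegral_abs_rpow_eq subset_rfl hpq.ne_zero]
    nth_rw 1 [setIntegral_abs_rpow_eq subset_rfl hpq.ne_zero]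
    exact le_of_tendsto_of_tendsto ((tendsto_integral_sq_mul_regPow hpq.pos hf.continuous
      hf.hasCompactSupport).const_mul l) ((((tendsto_setIntegral_regPow hpq.nonneg hf.continuous
        hf.hasCompactSupport).const_mul (l ^ q)).const_add A).const_mul C)
      (eventually_mem_nhdsWithin.mono fun η hη ↦
        mul_integral_sq_mul_regPow_le hη hpq hf hC.le hl₀.le h)
  have hlC : (2 * C) ^ p * l = 2 * C := by
    rw [hl, ← Real.rpow_add (by positivity), add_sub_cancel, Real.rpow_one]
  have habsorb : l * ∫ x, |f x| ^ p ≤ 2 * C * A := by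
    have := congrArg (· * ∫ x, |f x| ^ p) hlq
    beta_reduce at this
    linarith
  refine le_of_mul_le_mul_left ?_ (by positivity : 0 < 2 * C)
  calc 2 * C * ∫ x, |f x| ^ p = (2 * C) ^ p * (l * ∫ x, |f x| ^ p) := by rw [← mul_assoc, hlC]
    _ ≤ (2 * C) ^ p * (2 * C * A) := by gcongr
    _ = 2 * C * ((2 * C) ^ p * A) := by ring

theorem exists_lpNorm_pderiv_pderiv_le (hp : 1 < p) :
    ∃ C > 0, ∀ {d : ℕ} {φ : 𝔼 d → ℝ}, IsTestFunction φ → ∀ i j,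
      lpNorm (pderiv' i (pderiv' j φ)) (ENNReal.ofReal p) volume ≤
        C * lpNorm (lap φ) (ENNReal.ofReal p) volume := by
  have hpq := Real.HolderConjugate.conjExponent hp
  obtain ⟨C, hC, h⟩ := exists_integral_pderiv_pderiv_mul_le hpq
  refine ⟨2 * C, by positivity, fun {d φ} hφ i j ↦ ?_⟩
  have hle := integral_abs_rpow_le_of_forall_integral_mul_le hpq ((hφ.pderiv j).pderiv i) hC
    fun g hg ↦ h hφ hg i j
  have hp₀ : ENNReal.ofReal p ≠ 0 := by simpa using hpq.pos
  rw [lpNorm_eq_integral_norm_rpow_toReal hp₀ ENNReal.ofReal_ne_top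
      ((hφ.pderiv j).pderiv i).continuous.aestronglyMeasurable,
    lpNorm_eq_integral_norm_rpow_toReal hp₀ ENNReal.ofReal_ne_top
      hφ.lap.continuous.aestronglyMeasurable, ENNReal.toReal_ofReal hpq.nonneg]
  simp only [Real.norm_eq_abs]
  calc _ ≤ ((2 * C) ^ p * ∫ x, |lap φ x| ^ p) ^ p⁻¹ := by gcongr
    _ = _ := by
      rw [Real.mul_rpow (by positivity) (by positivity), Real.rpow_rpow_inv (by positivity)
        hpq.ne_zero]

end Duality

section Interpolation

variable {d : ℕ} {E : Type*} [NormedAddCommGroup E] [NormedSpace ℝ E] {h : 𝔼 d → E} {p : ℝ≥0∞}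

lemma IsTestFunction.lpNorm_integral_one_sub_smul_comp_le (hh : IsTestFunction h) (hp : 1 ≤ p)
    (hp' : p ≠ ⊤) (y : 𝔼 d) :
    lpNorm (fun x ↦ ∫ s in Ioc (0 : ℝ) 1, (1 - s) • h (x + s • y)) p volume
      ≤ lpNorm h p volume := by
  have hν : IsProbabilityMeasure (volume.restrict (Ioc (0 : ℝ) 1)) := ⟨by simp⟩
  have hcont := hh.continuous
  set G : 𝔼 d → ℝ := fun x ↦ ∫ s in Ioc (0 : ℝ) 1, ‖h (x + s • y)‖
  have hG : StronglyMeasurable G :=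
    StronglyMeasurable.integral_prod_right'
      (f := fun z : 𝔼 d × ℝ ↦ ‖h (z.1 + z.2 • y)‖) (Continuous.stronglyMeasurable (by fun_prop))
  have hGle : eLpNorm G p volume ≤ eLpNorm h p volume :=
    (eLpNorm_integral_comp_add_le hcont.norm.stronglyMeasurable
      (T := fun s : ℝ ↦ s • y) (by fun_prop) hp hp').trans_eq (eLpNorm_norm h)
  have hGmem : MemLp G p := ⟨hG.aestronglyMeasurable, hGle.trans_lt (hh.memLp p).2⟩
  have hle (x : 𝔼 d) : ‖∫ s in Ioc (0 : ℝ) 1, (1 - s) • h (x + s • y)‖ ≤ G x := by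
    refine norm_integral_le_of_norm_le (Continuous.integrableOn_Ioc (by fun_prop)) ?_
    filter_upwards [ae_restrict_mem measurableSet_Ioc] with s hs
    rw [norm_smul, Real.norm_of_nonneg (by linarith [hs.2])]
    exact mul_le_of_le_one_left (norm_nonneg _) (by linarith [hs.1])
  refine (lpNorm_mono_real hGmem hle).trans ?_
  rw [← toReal_eLpNorm hGmem.1, ← toReal_eLpNorm (hh.memLp p).1]
  exact ENNReal.toReal_mono (hh.memLp p).2.ne hGle

variable [CompleteSpace E]

lemma IsTestFunction.smul_pderiv_eq (hh : IsTestFunction h) (k : Fin d) (t : ℝ) (x : 𝔼 d) :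
    t • pderiv' k h x = h (x + t • EuclideanSpace.single k 1) - h x
      - t ^ 2 • ∫ s in Ioc (0 : ℝ) 1,
        (1 - s) • pderiv' k (pderiv' k h) (x + s • t • EuclideanSpace.single k 1) := by
  have hsmooth : ContDiff ℝ ((1 : ℕ) + 1) h := hh.contDiff.of_le (by norm_cast)
  have htaylor := map_add_eq_sum_add_integral_iteratedFDeriv (n := 1) (x := x)
    (y := t • EuclideanSpace.single k (1 : ℝ)) fun s _ ↦ hsmooth.contDiffAt
  have hsnd (s : ℝ) : (1 - s) ^ 1 • iteratedFDeriv ℝ (1 + 1) h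
      (x + s • t • EuclideanSpace.single k 1) (fun _ ↦ t • EuclideanSpace.single k 1)
      = t ^ 2 • (1 - s) • pderiv' k (pderiv' k h) (x + s • t • EuclideanSpace.single k 1) := by
    rw [one_add_one_eq_two, iteratedFDeriv_two_apply, hh.pderiv_pderiv_apply]
    simp [smul_smul]
    ring_nf
  simp_rw [hsnd] at htaylor
  rw [intervalIntegral.integral_smul, intervalIntegral.integral_of_le zero_le_one] at htaylor
  simp only [Nat.reduceAdd, Finset.sum_range_succ, Finset.range_one, Finset.sum_singleton,
    Nat.factorial_zero, Nat.cast_one, inv_one, iteratedFDeriv_zero_apply, one_smul,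
    Nat.factorial_one, iteratedFDeriv_one_apply, map_smul] at htaylor
  rw [htaylor, pderiv']
  abel

theorem IsTestFunction.lpNorm_pderiv_le (hh : IsTestFunction h) (hp : 1 ≤ p) (hp' : p ≠ ⊤)
    (k : Fin d) {t : ℝ} (ht : 0 < t) :
    lpNorm (pderiv' k h) p volume
      ≤ t * lpNorm (pderiv' k (pderiv' k h)) p volume + 2 / t * lpNorm h p volume := by
  have hτ := measurePreserving_add_right (volume : Measure (𝔼 d))
    (t • EuclideanSpace.single k (1 : ℝ))
  have hmem : MemLp (fun x ↦ h (x + t • EuclideanSpace.single k 1)) p :=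
    (hh.memLp p).comp_measurePreserving hτ
  have hshift : lpNorm (fun x ↦ h (x + t • EuclideanSpace.single k 1)) p volume
      = lpNorm h p volume := by
    rw [← toReal_eLpNorm hmem.1, ← toReal_eLpNorm (hh.memLp p).1]
    exact congrArg _ (eLpNorm_comp_measurePreserving (hh.memLp p).1 hτ)
  have hscaled : t * lpNorm (pderiv' k h) p volume ≤ lpNorm h p volume + lpNorm h p volume
      + t ^ 2 * lpNorm (pderiv' k (pderiv' k h)) p volume := by
    calc t * lpNorm (pderiv' k h) p volume
      _ = lpNorm (t • pderiv' k h) p volume := by simp [lpNorm_const_smul, abs_of_pos ht]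
      _ ≤ _ := by
        rw [show t • pderiv' k h = _ from funext (hh.smul_pderiv_eq k t)]
        refine (lpNorm_sub_le (hmem.sub (hh.memLp p)) hp).trans (add_le_add ?_ ?_)
        · exact (lpNorm_sub_le hmem hp).trans_eq (by rw [hshift])
        · refine (lpNorm_const_smul (t ^ 2) _ _).trans_le ?_
          rw [coe_nnnorm, Real.norm_of_nonneg (sq_nonneg t)]
          gcongr
          exact ((hh.pderiv k).pderiv k).lpNorm_integral_one_sub_smul_comp_le hp hp' _
  rw [← mul_le_mul_iff_right₀ ht]
  refine hscaled.trans_eq ?_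
  field

end Interpolation

section Weights

lemma lpNorm_smul_le_of_abs_le {α E : Type*} [MeasurableSpace α] {μ : Measure α}
    [NormedAddCommGroup E] [NormedSpace ℝ E] {u w : α → ℝ} {f : α → E} {p : ℝ≥0∞} {A : ℝ}
    (hA : 0 ≤ A) (hwf : MemLp (w • f) p μ) (hu : ∀ x, |u x| ≤ A * |w x|) :
    lpNorm (u • f) p μ ≤ A * lpNorm (w • f) p μ := by
  refine (lpNorm_mono_real (hwf.norm.const_smul A) fun x ↦ ?_).trans_eq ?_
  · simpa [norm_smul, mul_assoc] using mul_le_mul_of_nonneg_right (hu x) (norm_nonneg (f x))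
  · rw [lpNorm_const_smul, lpNorm_norm hwf.1, coe_nnnorm, Real.norm_of_nonneg hA]

variable {d : ℕ} {E : Type*} [NormedAddCommGroup E] [NormedSpace ℝ E] {w : 𝔼 d → ℝ}
  {f : 𝔼 d → E} {p : ℝ≥0∞} {A C : ℝ}

lemma pderiv'_smul (hw : Differentiable ℝ w) (hf : Differentiable ℝ f) (k : Fin d) :
    pderiv' k (w • f) = w • pderiv' k f + pderiv' k w • f := by
  ext x
  simpa [pderiv'] using pderiv'_eq_of_hasFDerivAt ((hw x).hasFDerivAt.smul (hf x).hasFDerivAt) k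

/-- Weights whose first and second partial derivatives are pointwise dominated by `A` times the
weight itself; these are the weights for which commuting `w` with the Laplacian produces only
terms of lower order. -/
structure IsAdmissibleWeight (A : ℝ) (w : 𝔼 d → ℝ) : Prop where
  nonneg : 0 ≤ A
  contDiff : ContDiff ℝ ∞ w
  abs_pderiv_le (k : Fin d) (x : 𝔼 d) : |pderiv' k w x| ≤ A * |w x|
  abs_pderiv_pderiv_le (i j : Fin d) (x : 𝔼 d) : |pderiv' i (pderiv' j w) x| ≤ A * |w x|

namespace IsAdmissibleWeight

lemma lpNorm_pderiv_smul_le (hw : IsAdmissibleWeight A w) (hf : IsTestFunction f) (k : Fin d) :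
    lpNorm (pderiv' k w • f) p volume ≤ A * lpNorm (w • f) p volume :=
  lpNorm_smul_le_of_abs_le hw.nonneg ((hf.smul hw.contDiff).memLp p) (hw.abs_pderiv_le k)

lemma lpNorm_pderiv_pderiv_smul_le (hw : IsAdmissibleWeight A w) (hf : IsTestFunction f)
    (i j : Fin d) :
    lpNorm (pderiv' i (pderiv' j w) • f) p volume ≤ A * lpNorm (w • f) p volume :=
  lpNorm_smul_le_of_abs_le hw.nonneg ((hf.smul hw.contDiff).memLp p)
    (hw.abs_pderiv_pderiv_le i j)

lemma pderiv_smul (hw : IsAdmissibleWeight A w) (hf : IsTestFunction f) (k : Fin d) :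
    pderiv' k (w • f) = w • pderiv' k f + pderiv' k w • f :=
  pderiv'_smul (hw.contDiff.differentiable (by simp)) hf.differentiable k

lemma pderiv_pderiv_smul (hw : IsAdmissibleWeight A w) (hf : IsTestFunction f) (i j : Fin d) :
    pderiv' i (pderiv' j (w • f)) = w • pderiv' i (pderiv' j f) + pderiv' i w • pderiv' j f
      + pderiv' j w • pderiv' i f + pderiv' i (pderiv' j w) • f := by
  have hwj : Differentiable ℝ (pderiv' j w) :=
    (contDiff_pderiv' hw.contDiff j).differentiable (by simp)
  ext x
  have hadd := pderiv'_eq_of_hasFDerivAt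
    ((((hf.pderiv j).smul hw.contDiff).differentiable x).hasFDerivAt.add
      ((hf.smul (contDiff_pderiv' hw.contDiff j)).differentiable x).hasFDerivAt) i
  have hexp : pderiv' i (w • pderiv' j f + pderiv' j w • f) x
      = pderiv' i (w • pderiv' j f) x + pderiv' i (pderiv' j w • f) x := hadd
  rw [hw.pderiv_smul hf j, hexp, hw.pderiv_smul (hf.pderiv j),
    pderiv'_smul hwj hf.differentiable]
  simp only [Pi.add_apply]
  abel

lemma lap_smul (hw : IsAdmissibleWeight A w) (hf : IsTestFunction f) :
    lap (w • f) = w • lap f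
      + ∑ k, ((2 : ℝ) • pderiv' k w • pderiv' k f + pderiv' k (pderiv' k w) • f) := by
  ext x
  simp only [lap, hw.pderiv_pderiv_smul hf, Pi.add_apply, Finset.sum_apply, Pi.smul_apply',
    Finset.smul_sum, ← Finset.sum_add_distrib, two_smul]
  exact Finset.sum_congr rfl fun k _ ↦ by abel

lemma lpNorm_smul_pderiv_le (hw : IsAdmissibleWeight A w) (hf : IsTestFunction f) (hp : 1 ≤ p)
    (k : Fin d) : lpNorm (w • pderiv' k f) p volume
      ≤ lpNorm (pderiv' k (w • f)) p volume + A * lpNorm (w • f) p volume := by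
  rw [eq_sub_of_add_eq (hw.pderiv_smul hf k).symm]
  exact (lpNorm_sub_le (((hf.smul hw.contDiff).pderiv k).memLp p) hp).trans
    (add_le_add_right (hw.lpNorm_pderiv_smul_le hf k) _)

lemma lpNorm_smul_pderiv_pderiv_le (hw : IsAdmissibleWeight A w) (hf : IsTestFunction f)
    (hp : 1 ≤ p) (i j : Fin d) : lpNorm (w • pderiv' i (pderiv' j f)) p volume
      ≤ lpNorm (pderiv' i (pderiv' j (w • f))) p volume + A * lpNorm (w • pderiv' j f) p volume
        + A * lpNorm (w • pderiv' i f) p volume + A * lpNorm (w • f) p volume := by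
  have heq : w • pderiv' i (pderiv' j f) = pderiv' i (pderiv' j (w • f))
      - pderiv' i w • pderiv' j f - pderiv' j w • pderiv' i f - pderiv' i (pderiv' j w) • f := by
    rw [hw.pderiv_pderiv_smul hf]
    abel
  have h₀ := (((hf.smul hw.contDiff).pderiv j).pderiv i).memLp p
  have h₁ := ((hf.pderiv j).smul (contDiff_pderiv' hw.contDiff i)).memLp p
  have h₂ := ((hf.pderiv i).smul (contDiff_pderiv' hw.contDiff j)).memLp p
  rw [heq]
  refine (lpNorm_sub_le ((h₀.sub h₁).sub h₂) hp).trans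
    (add_le_add ?_ (hw.lpNorm_pderiv_pderiv_smul_le hf i j))
  refine (lpNorm_sub_le (h₀.sub h₁) hp).trans
    (add_le_add ?_ (hw.lpNorm_pderiv_smul_le (hf.pderiv i) j))
  exact (lpNorm_sub_le h₀ hp).trans
    (add_le_add_right (hw.lpNorm_pderiv_smul_le (hf.pderiv j) i) _)

lemma lpNorm_lap_smul_le (hw : IsAdmissibleWeight A w) (hf : IsTestFunction f) (hp : 1 ≤ p) :
    lpNorm (lap (w • f)) p volume ≤ lpNorm (w • lap f) p volume
      + ∑ k, (2 * A * lpNorm (w • pderiv' k f) p volume + A * lpNorm (w • f) p volume) := by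
  have hfst (k : Fin d) : MemLp ((2 : ℝ) • pderiv' k w • pderiv' k f) p :=
    (((hf.pderiv k).smul (contDiff_pderiv' hw.contDiff k)).memLp p).const_smul 2
  have hsnd (k : Fin d) : MemLp (pderiv' k (pderiv' k w) • f) p :=
    (hf.smul (contDiff_pderiv' (contDiff_pderiv' hw.contDiff k) k)).memLp p
  rw [hw.lap_smul hf]
  refine (lpNorm_add_le ((hf.lap.smul hw.contDiff).memLp p) hp).trans (add_le_add_right ?_ _)
  refine (lpNorm_sum_le (fun k _ ↦ (hfst k).add (hsnd k)) hp).trans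
    (Finset.sum_le_sum fun k _ ↦ (lpNorm_add_le (hfst k) hp).trans (add_le_add ?_ ?_))
  · rw [lpNorm_const_smul, coe_nnnorm, Real.norm_two, mul_assoc]
    gcongr
    exact hw.lpNorm_pderiv_smul_le (hf.pderiv k) k
  · exact hw.lpNorm_pderiv_pderiv_smul_le hf k k

variable [CompleteSpace E]

lemma lpNorm_smul_pderiv_le_lap (hw : IsAdmissibleWeight A w) (hf : IsTestFunction f)
    (hp : 1 ≤ p) (hp' : p ≠ ⊤)
    (hC : ∀ {φ : 𝔼 d → E}, IsTestFunction φ → ∀ i j,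
      lpNorm (pderiv' i (pderiv' j φ)) p volume ≤ C * lpNorm (lap φ) p volume)
    (k : Fin d) {t : ℝ} (ht : 0 < t) :
    lpNorm (w • pderiv' k f) p volume
      ≤ t * (C * lpNorm (lap (w • f)) p volume) + (2 / t + A) * lpNorm (w • f) p volume := by
  have hwf : IsTestFunction (w • f) := hf.smul hw.contDiff
  calc lpNorm (w • pderiv' k f) p volume
    _ ≤ lpNorm (pderiv' k (w • f)) p volume + A * lpNorm (w • f) p volume :=
      hw.lpNorm_smul_pderiv_le hf hp k
    _ ≤ t * lpNorm (pderiv' k (pderiv' k (w • f))) p volume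
          + 2 / t * lpNorm (w • f) p volume + A * lpNorm (w • f) p volume := by
      gcongr
      exact hwf.lpNorm_pderiv_le hp hp' k ht
    _ ≤ t * (C * lpNorm (lap (w • f)) p volume)
          + 2 / t * lpNorm (w • f) p volume + A * lpNorm (w • f) p volume := by
      gcongr
      exact hC hwf k k
    _ = _ := by ring

lemma exists_lpNorm_lap_smul_le (hw : IsAdmissibleWeight A w) (hp : 1 ≤ p) (hp' : p ≠ ⊤)
    (hC₀ : 0 ≤ C) (hC : ∀ {φ : 𝔼 d → E}, IsTestFunction φ → ∀ i j,
      lpNorm (pderiv' i (pderiv' j φ)) p volume ≤ C * lpNorm (lap φ) p volume) :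
    ∃ M, 0 ≤ M ∧ ∀ {f : 𝔼 d → E}, IsTestFunction f →
      lpNorm (lap (w • f)) p volume
        ≤ 2 * lpNorm (w • lap f) p volume + M * lpNorm (w • f) p volume := by
  have hA := hw.nonneg
  obtain ⟨t, ht, htC⟩ : ∃ t > 0, d * (2 * A * (t * C)) ≤ 1 / 2 := by
    refine ⟨1 / (4 * (d * A * C) + 1), by positivity, ?_⟩
    field_simp
    linarith
  refine ⟨2 * (d * (2 * A * (2 / t + A) + A)), by positivity, fun {f} hf ↦ ?_⟩
  set L := lpNorm (lap (w • f)) p volume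
  set G := lpNorm (w • f) p volume
  have hcomm : L ≤ lpNorm (w • lap f) p volume
      + d * (2 * A * (t * (C * L) + (2 / t + A) * G) + A * G) := by
    refine (hw.lpNorm_lap_smul_le hf hp).trans (add_le_add_right ?_ _)
    refine (Finset.sum_le_card_nsmul _ _ _ fun k _ ↦ add_le_add_left
      (mul_le_mul_of_nonneg_left (hw.lpNorm_smul_pderiv_le_lap hf hp hp' hC k ht)
        (by positivity)) _).trans_eq ?_
    simp [L, G]
    ring
  have habsorb : d * (2 * A * (t * C)) * L ≤ 1 / 2 * L :=
    mul_le_mul_of_nonneg_right htC lpNorm_nonneg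
  linarith

lemma exists_lpNorm_smul_pderiv_le (hw : IsAdmissibleWeight A w) (hp : 1 ≤ p) (hp' : p ≠ ⊤)
    (hC₀ : 0 ≤ C) (hC : ∀ {φ : 𝔼 d → E}, IsTestFunction φ → ∀ i j,
      lpNorm (pderiv' i (pderiv' j φ)) p volume ≤ C * lpNorm (lap φ) p volume) :
    ∃ M, 0 ≤ M ∧ ∀ {f : 𝔼 d → E}, IsTestFunction f → ∀ k,
      lpNorm (w • pderiv' k f) p volume
        ≤ M * (lpNorm (w • lap f) p volume + lpNorm (w • f) p volume) := by
  obtain ⟨M, hM, hlap⟩ := hw.exists_lpNorm_lap_smul_le hp hp' hC₀ hC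
  have hA := hw.nonneg
  refine ⟨2 * C + (C * M + 2 + A), by positivity, fun {f} hf k ↦ ?_⟩
  calc lpNorm (w • pderiv' k f) p volume
    _ ≤ 1 * (C * lpNorm (lap (w • f)) p volume) + (2 / 1 + A) * lpNorm (w • f) p volume :=
      hw.lpNorm_smul_pderiv_le_lap hf hp hp' hC k one_pos
    _ ≤ 1 * (C * (2 * lpNorm (w • lap f) p volume + M * lpNorm (w • f) p volume))
          + (2 / 1 + A) * lpNorm (w • f) p volume := by
      gcongr
      exact hlap hf
    _ = 2 * C * lpNorm (w • lap f) p volume + (C * M + 2 + A) * lpNorm (w • f) p volume := by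
      ring
    _ ≤ (2 * C + (C * M + 2 + A)) * (lpNorm (w • lap f) p volume + lpNorm (w • f) p volume) := by
      rw [add_mul (2 * C)]
      gcongr <;> simp

lemma exists_lpNorm_smul_pderiv_pderiv_le (hw : IsAdmissibleWeight A w) (hp : 1 ≤ p)
    (hp' : p ≠ ⊤) (hC₀ : 0 ≤ C) (hC : ∀ {φ : 𝔼 d → E}, IsTestFunction φ → ∀ i j,
      lpNorm (pderiv' i (pderiv' j φ)) p volume ≤ C * lpNorm (lap φ) p volume) :
    ∃ M, 0 ≤ M ∧ ∀ {f : 𝔼 d → E}, IsTestFunction f → ∀ i j,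
      lpNorm (w • pderiv' i (pderiv' j f)) p volume
        ≤ M * (lpNorm (w • lap f) p volume + lpNorm (w • f) p volume) := by
  obtain ⟨M, hM, hlap⟩ := hw.exists_lpNorm_lap_smul_le hp hp' hC₀ hC
  obtain ⟨M₁, hM₁, hfst⟩ := hw.exists_lpNorm_smul_pderiv_le hp hp' hC₀ hC
  have hA := hw.nonneg
  refine ⟨2 * C + (C * M + A) + 2 * A * M₁, by positivity, fun {f} hf i j ↦ ?_⟩
  set T := lpNorm (w • lap f) p volume + lpNorm (w • f) p volume with hT
  calc lpNorm (w • pderiv' i (pderiv' j f)) p volume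
    _ ≤ lpNorm (pderiv' i (pderiv' j (w • f))) p volume + A * lpNorm (w • pderiv' j f) p volume
          + A * lpNorm (w • pderiv' i f) p volume + A * lpNorm (w • f) p volume :=
      hw.lpNorm_smul_pderiv_pderiv_le hf hp i j
    _ ≤ C * (2 * lpNorm (w • lap f) p volume + M * lpNorm (w • f) p volume) + A * (M₁ * T)
          + A * (M₁ * T) + A * lpNorm (w • f) p volume := by
      gcongr
      · exact (hC (hf.smul hw.contDiff) i j).trans (mul_le_mul_of_nonneg_left (hlap hf) hC₀)
      · exact hfst hf j
      · exact hfst hf i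
    _ = 2 * C * lpNorm (w • lap f) p volume + (C * M + A) * lpNorm (w • f) p volume
          + 2 * A * M₁ * T := by ring
    _ ≤ (2 * C + (C * M + A) + 2 * A * M₁) * T := by
      rw [add_mul _ (2 * A * M₁), add_mul (2 * C)]
      gcongr <;> simp [hT]

end IsAdmissibleWeight

end Weights

section JapaneseBracket

variable {d : ℕ}

lemma one_le_jb (x : 𝔼 d) : 1 ≤ jb x := Real.one_le_sqrt.2 (by nlinarith [sq_nonneg ‖x‖])

lemma jb_pos (x : 𝔼 d) : 0 < jb x := zero_lt_one.trans_le (one_le_jb x)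

lemma abs_apply_le_jb (x : 𝔼 d) (k : Fin d) : |x k| ≤ jb x :=
  (PiLp.norm_apply_le x k).trans (Real.le_sqrt_of_sq_le (by linarith))

lemma jb_rpow (a : ℝ) (x : 𝔼 d) : jb x ^ a = (1 + ‖x‖ ^ 2) ^ (a / 2) := by
  rw [jb, Real.sqrt_eq_rpow, ← Real.rpow_mul (by positivity)]
  ring_nf

lemma contDiff_jb_rpow (a : ℝ) : ContDiff ℝ ∞ fun x : 𝔼 d ↦ jb x ^ a := by
  simp_rw [jb_rpow]
  exact (contDiff_const.add (contDiff_norm_sq ℝ)).rpow_const_of_ne fun x ↦ by positivity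

lemma pderiv'_jb_rpow (a : ℝ) (k : Fin d) :
    pderiv' k (fun x ↦ jb x ^ a) = fun x ↦ a * x k * jb x ^ (a - 2) := by
  ext x
  have hbase : HasFDerivAt (fun y : 𝔼 d ↦ 1 + ‖y‖ ^ 2) (2 • innerSL ℝ x) x :=
    (hasStrictFDerivAt_norm_sq x).hasFDerivAt.const_add 1
  simp_rw [jb_rpow]
  rw [pderiv'_eq_of_hasFDerivAt (hbase.rpow_const (p := a / 2) (.inl (by positivity)))]
  simp [EuclideanSpace.inner_single_right, sub_div]
  ring

lemma pderiv'_pderiv'_jb_rpow (a : ℝ) (i j : Fin d) (x : 𝔼 d) :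
    pderiv' i (pderiv' j fun x ↦ jb x ^ a) x
      = a * (if i = j then 1 else 0) * jb x ^ (a - 2)
        + a * x j * ((a - 2) * x i * jb x ^ (a - 4)) := by
  have hcoord (y : 𝔼 d) : HasFDerivAt (fun x : 𝔼 d ↦ a * x j)
      (a • (EuclideanSpace.proj j : 𝔼 d →L[ℝ] ℝ)) y :=
    (EuclideanSpace.proj j : 𝔼 d →L[ℝ] ℝ).hasFDerivAt.const_mul a
  have hmul := congrFun (pderiv'_smul (fun y ↦ (hcoord y).differentiableAt)
    ((contDiff_jb_rpow (a - 2)).differentiable (by simp)) i) x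
  rw [pderiv'_jb_rpow]
  refine hmul.trans ?_
  simp only [Pi.add_apply, Pi.smul_apply', pderiv'_jb_rpow, pderiv'_eq_of_hasFDerivAt (hcoord x)]
  simp [eq_comm (a := j), show a - 2 - 2 = a - 4 by ring]
  ring

lemma abs_apply_mul_jb_rpow_le (a : ℝ) (x : 𝔼 d) (k : Fin d) :
    |x k| * jb x ^ a ≤ jb x ^ (a + 1) := by
  rw [Real.rpow_add_one (jb_pos x).ne', mul_comm]
  exact mul_le_mul_of_nonneg_left (abs_apply_le_jb x k) (Real.rpow_nonneg (jb_pos x).le a)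

lemma isAdmissibleWeight_jb_rpow (a : ℝ) :
    IsAdmissibleWeight (|a| + |a| * |a - 2|) fun x : 𝔼 d ↦ jb x ^ a where
  nonneg := by positivity
  contDiff := contDiff_jb_rpow a
  abs_pderiv_le k x := by
    have hmono : jb x ^ (a - 2 + 1) ≤ jb x ^ a :=
      Real.rpow_le_rpow_of_exponent_le (one_le_jb x) (by linarith)
    have hjb := jb_pos x
    have hpos (b : ℝ) : 0 < jb x ^ b := by positivity
    rw [pderiv'_jb_rpow, abs_mul, abs_mul, abs_of_pos (hpos _), abs_of_pos (hpos _), mul_assoc]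
    calc |a| * (|x k| * jb x ^ (a - 2))
      _ ≤ |a| * jb x ^ a := by gcongr; exact (abs_apply_mul_jb_rpow_le _ x k).trans hmono
      _ ≤ (|a| + |a| * |a - 2|) * jb x ^ a := by
        gcongr; exact le_add_of_nonneg_right (by positivity)
  abs_pderiv_pderiv_le i j x := by
    have hmono : jb x ^ (a - 2) ≤ jb x ^ a :=
      Real.rpow_le_rpow_of_exponent_le (one_le_jb x) (by linarith)
    have hjb := jb_pos x
    have hpos (b : ℝ) : 0 < jb x ^ b := by positivity
    have hδ : |(if i = j then 1 else 0 : ℝ)| ≤ 1 := by split_ifs <;> simp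
    have hquad : |x j| * (|x i| * jb x ^ (a - 4)) ≤ jb x ^ (a - 2) := by
      calc |x j| * (|x i| * jb x ^ (a - 4))
        _ ≤ |x j| * jb x ^ (a - 4 + 1) := by gcongr; exact abs_apply_mul_jb_rpow_le _ x i
        _ ≤ jb x ^ (a - 4 + 1 + 1) := abs_apply_mul_jb_rpow_le _ x j
        _ = jb x ^ (a - 2) := by ring_nf
    rw [pderiv'_pderiv'_jb_rpow, abs_of_pos (hpos a)]
    refine (abs_add_le _ _).trans ?_
    simp only [abs_mul, abs_of_pos (hpos _)]
    calc |a| * |(if i = j then 1 else 0 : ℝ)| * jb x ^ (a - 2)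
          + |a| * |x j| * (|a - 2| * |x i| * jb x ^ (a - 4))
      _ = |a| * (|(if i = j then 1 else 0 : ℝ)| * jb x ^ (a - 2))
          + |a| * |a - 2| * (|x j| * (|x i| * jb x ^ (a - 4))) := by ring
      _ ≤ |a| * (1 * jb x ^ a) + |a| * |a - 2| * jb x ^ a := by
        gcongr
        exact hquad.trans hmono
      _ = (|a| + |a| * |a - 2|) * jb x ^ a := by ring

lemma wLp_eq_lpNorm {E : Type*} [NormedAddCommGroup E] [NormedSpace ℝ E] {f : 𝔼 d → E}
    (hf : IsTestFunction f) (p δ : ℝ) :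
    wLp p δ f = lpNorm ((fun x : 𝔼 d ↦ jb x ^ δ) • f) (ENNReal.ofReal p) volume :=
  toReal_eLpNorm (hf.smul (contDiff_jb_rpow δ)).continuous.aestronglyMeasurable

end JapaneseBracket

section MultiIndex

variable {d : ℕ} {E : Type*} [NormedAddCommGroup E] [NormedSpace ℝ E]

lemma mderiv_eq_foldr (α : Fin d → ℕ) (f : 𝔼 d → E) :
    mderiv α f = ((List.finRange d).flatMap fun i ↦ List.replicate (α i) i).foldr pderiv' f := by
  have hiterate (i : Fin d) (n : ℕ) (g : 𝔼 d → E) :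
      (pderiv' i)^[n] g = (List.replicate n i).foldr pderiv' g := by
    induction n with
    | zero => rfl
    | succ n ih => rw [Function.iterate_succ_apply', ih, List.replicate_succ, List.foldr_cons]
  simp only [mderiv, List.foldr_flatMap, hiterate]

lemma mderiv_of_sum_le_two {α : Fin d → ℕ} (hα : ∑ i, α i ≤ 2) (f : 𝔼 d → E) :
    mderiv α f = f ∨ (∃ k, mderiv α f = pderiv' k f) ∨
      ∃ i j, mderiv α f = pderiv' i (pderiv' j f) := by
  have hlength : ((List.finRange d).flatMap fun i ↦ List.replicate (α i) i).length ≤ 2 := by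
    simpa [List.length_flatMap, ← Fin.sum_univ_def] using hα
  rw [mderiv_eq_foldr]
  match (List.finRange d).flatMap fun i ↦ List.replicate (α i) i, hlength with
  | [], _ => exact .inl rfl
  | [k], _ => exact .inr (.inl ⟨k, rfl⟩)
  | [i, j], _ => exact .inr (.inr ⟨i, j, rfl⟩)

end MultiIndex

theorem exists_wLp_mderiv_le {d : ℕ} {p : ℝ} (hp : 1 < p) (δ : ℝ) :
    ∃ C, 0 ≤ C ∧ ∀ {g : 𝔼 d → ℝ}, IsTestFunction g → ∀ {α : Fin d → ℕ}, ∑ i, α i ≤ 2 →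
      wLp p δ (mderiv α g) ≤ C * (wLp p δ (lap g) + wLp p δ g) := by
  have hp₁ : 1 ≤ ENNReal.ofReal p := by simpa using hp.le
  have hw := isAdmissibleWeight_jb_rpow (d := d) δ
  obtain ⟨C, hC, hCZ⟩ := exists_lpNorm_pderiv_pderiv_le hp
  obtain ⟨M₁, hM₁, hfst⟩ :=
    hw.exists_lpNorm_smul_pderiv_le hp₁ ENNReal.ofReal_ne_top hC.le (E := ℝ) hCZ
  obtain ⟨M₂, hM₂, hsnd⟩ :=
    hw.exists_lpNorm_smul_pderiv_pderiv_le hp₁ ENNReal.ofReal_ne_top hC.le (E := ℝ) hCZ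
  refine ⟨1 + M₁ + M₂, by positivity, fun {g} hg {α} hα ↦ ?_⟩
  have hΛ : 0 ≤ wLp p δ (lap g) := ENNReal.toReal_nonneg
  have hG : 0 ≤ wLp p δ g := ENNReal.toReal_nonneg
  have hT : 0 ≤ wLp p δ (lap g) + wLp p δ g := add_nonneg hΛ hG
  have hle {M : ℝ} (hM : M ≤ 1 + M₁ + M₂) : M * (wLp p δ (lap g) + wLp p δ g)
      ≤ (1 + M₁ + M₂) * (wLp p δ (lap g) + wLp p δ g) := mul_le_mul_of_nonneg_right hM hT
  rcases mderiv_of_sum_le_two hα g with h | ⟨k, h⟩ | ⟨i, j, h⟩ <;> rw [h]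
  · exact le_trans (by linarith) (hle (M := 1) (by linarith))
  · refine le_trans ?_ (hle (M := M₁) (by linarith))
    rw [wLp_eq_lpNorm hg.lap, wLp_eq_lpNorm hg, wLp_eq_lpNorm (hg.pderiv k)]
    exact hfst hg k
  · refine le_trans ?_ (hle (M := M₂) (by linarith))
    rw [wLp_eq_lpNorm hg.lap, wLp_eq_lpNorm hg, wLp_eq_lpNorm ((hg.pderiv j).pderiv i)]
    exact hsnd hg i j

/-- Elliptic a priori estimate:
`‖g‖_{H^{2,p}_δ} ≤ C (‖⟨·⟩^δ Δg‖_{L^p} + ‖⟨·⟩^δ g‖_{L^p})` for `g ∈ C_c^∞(ℝ^d)`. -/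
theorem stmt8 (d : ℕ) (hd : 1 ≤ d) (p : ℝ) (hp : 1 < p) (δ : ℝ) :
    ∃ C : ℝ, 0 < C ∧ ∀ g : EuclideanSpace ℝ (Fin d) → ℝ,
      ContDiff ℝ (⊤ : ℕ∞) g → HasCompactSupport g →
        Hnorm d 2 p δ g ≤ C * (wLp p δ (lap g) + wLp p δ g) := by
  obtain ⟨C, hC, hmderiv⟩ := exists_wLp_mderiv_le (d := d) hp δ
  set s := Finset.univ.filter fun α : Fin d → Fin (2 + 1) ↦ ∑ i, (α i : ℕ) ≤ 2
  refine ⟨s.card * C + 1, by positivity, fun g hg hgc ↦ ?_⟩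
  have hT : 0 ≤ wLp p δ (lap g) + wLp p δ g :=
    add_nonneg ENNReal.toReal_nonneg ENNReal.toReal_nonneg
  calc Hnorm d 2 p δ g
    _ ≤ s.card • (C * (wLp p δ (lap g) + wLp p δ g)) :=
      Finset.sum_le_card_nsmul s _ _ fun α hα ↦ hmderiv ⟨hg, hgc⟩ (Finset.mem_filter.1 hα).2
    _ = s.card * C * (wLp p δ (lap g) + wLp p δ g) := by rw [nsmul_eq_mul, mul_assoc]
    _ ≤ (s.card * C + 1) * (wLp p δ (lap g) + wLp p δ g) := by gcongr; simp
end
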